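/- arXiv:2410.21700 — 2 statements merged into one kernel-verified Lean document; each statement's English description precedes it below -/
import Mathlib

section
/- Let λ > 1, let α be Diophantine, and let θ ∈ ℝ satisfy δ(α,θ) < ln λ. Let {φ_s} be an orthonormal basis of ℓ²(ℤ) of eigenfunctions of H_{λ,α,θ}, with m_s a global maximum of |φ_s|. Then there exist constants C, C₁, C₂ > 0 and M such that for every s with |m_s| ≥ M and all n, ℓ ∈ ℤ: |φ_s(n)·φ_s(ℓ)| ≤ C·e^{−C₁|n−ℓ| + C₂|n|}. -/
noncomputable section

open Filter Real

def distToInt (x : ℝ) : ℝ := |x - round x|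

def IsDiophantine (α : ℝ) : Prop :=
  ∃ κ τ : ℝ, 0 < κ ∧ 0 < τ ∧ ∀ k : ℤ, k ≠ 0 → τ / |(k : ℝ)| ^ κ ≤ distToInt (k * α)

def deltaPhase (α θ : ℝ) : ℝ :=
  limsup (fun n : ℤ => -Real.log (distToInt (2 * θ + n * α)) / |(n : ℝ)|) cofinite

def amoPot (lam α θ : ℝ) : ℤ → ℝ := fun n => 2 * lam * Real.cos (2 * Real.pi * (θ + n * α))

def IsEigenfunction (g : ℤ → ℝ) (E : ℝ) (φ : ℤ → ℝ) : Prop :=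
  ∀ n : ℤ, φ (n + 1) + φ (n - 1) + g n * φ n = E * φ n

def deltaPot (g : ℤ → ℝ) : ℝ :=
  limsup (fun n : ℤ => -Real.log (⨆ m : ℤ, |g (n - m) - g m|) / |(n : ℝ)|) cofinite

def matNorm (M : Matrix (Fin 2) (Fin 2) ℝ) : ℝ := ⨆ p : Fin 2 × Fin 2, |M p.1 p.2|

def transfer (g : ℤ → ℝ) (E : ℝ) : ℕ → ℤ → Matrix (Fin 2) (Fin 2) ℝ
  | 0, _ => 1
  | n + 1, k => !![E - g (k + n), -1; 1, 0] * transfer g E n k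

def LyapSup (g : ℤ → ℝ) (E : ℝ) : ℝ :=
  limsup (fun n : ℕ => ⨆ k : ℤ, Real.log (matNorm (transfer g E n k)) / n) atTop

def HasSULE (g : ℤ → ℝ) : Prop :=
  ∃ (Φ : HilbertBasis ℕ ℝ (lp (fun _ : ℤ => ℝ) 2)) (ns : ℕ → ℤ) (γ : ℝ),
    0 < γ ∧
    (∀ s : ℕ, ∃ E : ℝ, IsEigenfunction g E (fun n => Φ s n)) ∧
    ∀ ε : ℝ, 0 < ε → ∃ C : ℝ,
      ∀ (s : ℕ) (n : ℤ),
        |Φ s n| ≤ C * Real.exp (ε * |(ns s : ℝ)|) * Real.exp (-γ * |(n : ℝ) - (ns s : ℝ)|)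

/-!
The determinant of `E - H` on an interval of length `k` with Dirichlet boundary conditions is a
polynomial of degree `k` in a cosine of the phase, whose supremum over all phases is at least
`λ ^ k`. By Lagrange interpolation it must be almost this large at one of any `k + 1` orbit points
that are well separated, and the separation is measured by products of chords of the unit circle,
hence by the small divisors `j * α` and `2 * θ + j * α`. The Diophantine condition leaves at most
one harmful small divisor `2 * θ + n * α` at each scale. If `n` is far from `y`, the interpolation
points can be chosen to avoid it; if `n` is near `y`, its loss `exp (δ * |n|)` is beaten by the gain
because `δ < log λ`. A large determinant forces decay through Cramer's rule, so an eigenfunction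
cannot be large both at `0` and at `y`, and covariance under translation and reflection gives decay
of `φ 0 * φ ℓ` and `φ 1 * φ ℓ` in `ℓ`. The recurrence bounds `φ n` by
`exp (b * |n|) * (|φ 0| + |φ 1|)`, which yields the product bound.
-/

/-! ### The distance to the nearest integer -/

lemma distToInt_eq_norm (x : ℝ) : distToInt x = ‖(x : UnitAddCircle)‖ :=
  UnitAddCircle.norm_eq.symm

lemma distToInt_nonneg (x : ℝ) : 0 ≤ distToInt x := abs_nonneg _

lemma distToInt_neg (x : ℝ) : distToInt (-x) = distToInt x := by
  simp only [distToInt_eq_norm, AddCircle.coe_neg, norm_neg]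

lemma distToInt_sub_le (x y : ℝ) : distToInt (x - y) ≤ distToInt x + distToInt y := by
  simpa only [distToInt_eq_norm, AddCircle.coe_sub] using norm_sub_le _ _

lemma distToInt_natAbs_mul (z : ℤ) (α : ℝ) :
    distToInt ((z.natAbs : ℝ) * α) = distToInt (z * α) := by
  rw [Nat.cast_natAbs, Int.cast_abs]
  rcases abs_choice (z : ℝ) with h | h
  · rw [h]
  · rw [h, neg_mul, distToInt_neg]

/-- The Diophantine condition `IsDiophantine` with exponent `κ` and constant `τ` made explicit. -/
def DiophantineWith (κ τ α : ℝ) : Prop :=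
  ∀ k : ℤ, k ≠ 0 → τ / |(k : ℝ)| ^ κ ≤ distToInt (k * α)

lemma IsDiophantine.exists_diophantineWith {α : ℝ} (hα : IsDiophantine α) :
    ∃ κ τ : ℝ, 0 < κ ∧ 0 < τ ∧ DiophantineWith κ τ α := hα

lemma DiophantineWith.le_distToInt_natCast {κ τ α : ℝ} (h : DiophantineWith κ τ α) {n : ℕ}
    (hn : n ≠ 0) : τ / (n : ℝ) ^ κ ≤ distToInt (n * α) := by
  simpa only [Int.cast_natCast, Nat.abs_cast] using h n (by exact_mod_cast hn)

lemma IsDiophantine.distToInt_pos {α : ℝ} (hα : IsDiophantine α) {k : ℤ} (hk : k ≠ 0) :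
    0 < distToInt (k * α) := by
  obtain ⟨κ, τ, -, hτ, h⟩ := hα.exists_diophantineWith
  have : (k : ℝ) ≠ 0 := by exact_mod_cast hk
  exact lt_of_lt_of_le (by positivity) (h k hk)

/-! ### Chords of the unit circle -/

/-- The chord `|1 - e ^ (2πiu)|` of the unit circle. -/
def chord (u : ℝ) : ℝ := |2 * Real.sin (π * u)|

lemma chord_nonneg (u : ℝ) : 0 ≤ chord u := abs_nonneg _

lemma chord_le_two (u : ℝ) : chord u ≤ 2 := by
  rw [chord, abs_mul, abs_two]
  linarith [abs_sin_le_one (π * u)]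

lemma abs_sin_pi_mul_sub_intCast (u : ℝ) (z : ℤ) :
    |Real.sin (π * (u - z))| = |Real.sin (π * u)| := by
  rw [show π * (u - z) = π * u - z * π by ring, Real.sin_sub_int_mul_pi, abs_mul,
    abs_neg_one_zpow, one_mul]

lemma four_mul_distToInt_le_chord (u : ℝ) : 4 * distToInt u ≤ chord u := by
  rw [chord, abs_mul, abs_two, ← abs_sin_pi_mul_sub_intCast u (round u), distToInt]
  have hjordan := Real.mul_abs_le_abs_sin (x := π * (u - round u)) (by
    rw [abs_mul, abs_of_pos pi_pos]
    nlinarith [pi_pos, abs_sub_round u])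
  rw [abs_mul, abs_of_pos pi_pos, ← mul_assoc, div_mul_cancel₀ _ pi_ne_zero] at hjordan
  linarith

lemma distToInt_le_chord (u : ℝ) : distToInt u ≤ chord u := by
  linarith [four_mul_distToInt_le_chord u, distToInt_nonneg u]

lemma chord_le_distToInt (u : ℝ) : chord u ≤ 2 * π * distToInt u := by
  rw [chord, abs_mul, abs_two, ← abs_sin_pi_mul_sub_intCast u (round u), distToInt]
  have := Real.abs_sin_le_abs (x := π * (u - round u))
  rw [abs_mul, abs_of_pos pi_pos] at this
  linarith

lemma chord_sq (u : ℝ) : chord u ^ 2 = 2 - 2 * Real.cos (2 * π * u) := by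
  rw [chord, sq_abs, show 2 * π * u = 2 * (π * u) by ring, Real.cos_two_mul, mul_pow, Real.sin_sq]
  ring

lemma chord_neg (u : ℝ) : chord (-u) = chord u := by
  rw [chord, chord, mul_neg, Real.sin_neg, mul_neg, abs_neg]

lemma abs_cos_sub_cos_eq_chord (a b : ℝ) :
    |Real.cos (2 * π * a) - Real.cos (2 * π * b)| = 1 / 2 * (chord (a + b) * chord (a - b)) := by
  rw [Real.cos_sub_cos, show (2 * π * a + 2 * π * b) / 2 = π * (a + b) by ring,
    show (2 * π * a - 2 * π * b) / 2 = π * (a - b) by ring]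
  simp only [chord, abs_mul, abs_neg, abs_two]
  ring

/-! ### Birkhoff sums of the damped logarithm -/

/-- The squared modulus `|1 - r e ^ (2πiu)| ^ 2`, a smooth regularisation of `chord u ^ 2` for
`r < 1`. -/
def dampedChordSq (r u : ℝ) : ℝ := (1 - r) ^ 2 + r * chord u ^ 2

section DampedChord

variable {r : ℝ}

lemma dampedChordSq_eq_norm_sq (r u : ℝ) :
    dampedChordSq r u = ‖1 - (r : ℂ) * Complex.exp ((2 * π * u : ℝ) * Complex.I)‖ ^ 2 := by
  rw [Complex.sq_norm, Complex.normSq_apply]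
  simp only [Complex.sub_re, Complex.one_re, Complex.re_ofReal_mul, Complex.sub_im,
    Complex.one_im, Complex.im_ofReal_mul, Complex.exp_ofReal_mul_I_re,
    Complex.exp_ofReal_mul_I_im]
  rw [dampedChordSq, chord_sq]
  linear_combination -r ^ 2 * Real.sin_sq_add_cos_sq (2 * π * u)

lemma one_sub_sq_le_dampedChordSq (hr : 0 < r) (u : ℝ) : (1 - r) ^ 2 ≤ dampedChordSq r u :=
  le_add_of_nonneg_right (by positivity)

lemma mul_chord_sq_le_dampedChordSq (r u : ℝ) : r * chord u ^ 2 ≤ dampedChordSq r u :=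
  le_add_of_nonneg_left (sq_nonneg _)

lemma dampedChordSq_pos (hr : 0 < r) (hr1 : r < 1) (u : ℝ) : 0 < dampedChordSq r u :=
  (pow_pos (sub_pos.2 hr1) 2).trans_le (one_sub_sq_le_dampedChordSq hr u)

lemma dampedChordSq_le (hr : 0 < r) (hr1 : r < 1) (u : ℝ) : dampedChordSq r u ≤ 5 := by
  have hchord : chord u ^ 2 ≤ 2 ^ 2 := pow_le_pow_left₀ (chord_nonneg u) (chord_le_two u) 2
  rw [dampedChordSq]
  nlinarith

lemma exists_abs_log_dampedChordSq_le (hr : 0 < r) (hr1 : r < 1) :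
    ∃ B : ℝ, 0 ≤ B ∧ ∀ u, |Real.log (dampedChordSq r u)| ≤ B := by
  refine ⟨max |Real.log ((1 - r) ^ 2)| |Real.log 5|, by positivity, fun u => ?_⟩
  exact abs_le_max_abs_abs
    (Real.log_le_log (pow_pos (sub_pos.2 hr1) 2) (one_sub_sq_le_dampedChordSq hr u))
    (Real.log_le_log (dampedChordSq_pos hr hr1 u) (dampedChordSq_le hr hr1 u))

lemma hasSum_log_dampedChordSq (hr : 0 < r) (hr1 : r < 1) (u : ℝ) :
    HasSum (fun m : ℕ => r ^ m / m * Real.cos (2 * π * m * u))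
      (-(1 / 2) * Real.log (dampedChordSq r u)) := by
  have hz : ‖(r : ℂ) * Complex.exp ((2 * π * u : ℝ) * Complex.I)‖ < 1 := by
    rw [norm_mul, Complex.norm_exp_ofReal_mul_I, Complex.norm_real, Real.norm_eq_abs,
      abs_of_pos hr, mul_one]
    exact hr1
  convert Complex.hasSum_re (Complex.hasSum_taylorSeries_neg_log hz) using 1
  · funext m
    have hterm : ((r : ℂ) * Complex.exp ((2 * π * u : ℝ) * Complex.I)) ^ m / m =
        ((r ^ m / m : ℝ) : ℂ) * Complex.exp (((2 * π * m * u : ℝ) : ℂ) * Complex.I) := by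
      rw [mul_pow, ← Complex.exp_nat_mul, ← mul_assoc]
      push_cast
      ring_nf
    rw [hterm, Complex.re_ofReal_mul, Complex.exp_ofReal_mul_I_re]
  · rw [Complex.neg_re, Complex.log_re, dampedChordSq_eq_norm_sq, Real.log_pow]
    push_cast
    ring

end DampedChord

/-- The `m`-th Fourier mode of the solution `h` of the cohomological equation
`-(1/2) log (dampedChordSq r u) = h (u + α) - h u`. -/
def cohomMode (α r u : ℝ) (m : ℕ) : ℝ :=
  r ^ m / m * (Real.sin (2 * π * m * u - π * (m * α)) / (2 * Real.sin (π * (m * α))))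

lemma cohomMode_add_sub (r u : ℝ) {α : ℝ} {m : ℕ} (hm : 0 < chord (m * α)) :
    cohomMode α r (u + α) m - cohomMode α r u m = r ^ m / m * Real.cos (2 * π * m * u) := by
  have hsin : 2 * Real.sin (π * (m * α)) ≠ 0 := abs_pos.1 hm
  rw [cohomMode, cohomMode, ← mul_sub, ← sub_div]
  congr 1
  rw [div_eq_iff hsin,
    show 2 * π * m * (u + α) - π * (m * α) = 2 * π * m * u + π * (m * α) by ring,
    Real.sin_add, Real.sin_sub]
  ring

lemma norm_cohomMode_le {α κ τ r : ℝ} (h : DiophantineWith κ τ α) (hτ : 0 < τ) (hr : 0 < r)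
    {K : ℕ} (hK : κ ≤ K) (u : ℝ) (m : ℕ) :
    ‖cohomMode α r u m‖ ≤ (m : ℝ) ^ K * r ^ m * (1 / τ) := by
  rcases Nat.eq_zero_or_pos m with rfl | hm
  · simp only [cohomMode, Nat.cast_zero, div_zero, zero_mul, norm_zero]
    positivity
  have hm1 : (1 : ℝ) ≤ m := by exact_mod_cast hm
  have hchord : τ / (m : ℝ) ^ K ≤ chord (m * α) :=
    calc τ / (m : ℝ) ^ K ≤ τ / (m : ℝ) ^ κ := by
          rw [← Real.rpow_natCast]
          gcongr
      _ ≤ distToInt (m * α) := h.le_distToInt_natCast hm.ne'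
      _ ≤ chord (m * α) := distToInt_le_chord _
  calc ‖cohomMode α r u m‖
      = r ^ m / m * (|Real.sin (2 * π * m * u - π * (m * α))| / chord (m * α)) := by
        rw [cohomMode, norm_mul, norm_div, norm_div, Real.norm_of_nonneg (pow_nonneg hr.le m),
          Real.norm_of_nonneg m.cast_nonneg]
        rfl
    _ ≤ r ^ m * (1 / (τ / (m : ℝ) ^ K)) := by
        gcongr
        · exact div_nonneg (abs_nonneg _) (chord_nonneg _)
        · exact div_le_self (by positivity) hm1
        · exact abs_sin_le_one _
    _ = (m : ℝ) ^ K * r ^ m * (1 / τ) := by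
        field_simp

/-- The small divisors `sin (π m α)` are only polynomially small whereas the Fourier coefficients
of the damped logarithm decay geometrically. -/
lemma exists_bounded_coboundary_log_dampedChordSq {α : ℝ} (hα : IsDiophantine α) {r : ℝ}
    (hr : 0 < r) (hr1 : r < 1) :
    ∃ (h : ℝ → ℝ) (S : ℝ), (∀ u, |h u| ≤ S) ∧
      ∀ u, Real.log (dampedChordSq r u) = h (u + α) - h u := by
  obtain ⟨κ, τ, -, hτ, hdioph⟩ := hα.exists_diophantineWith
  obtain ⟨K, hK⟩ := exists_nat_ge κ
  have hsum : Summable (fun m : ℕ => (m : ℝ) ^ K * r ^ m * (1 / τ)) :=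
    (summable_pow_mul_geometric_of_norm_lt_one K (r := r)
      (by rwa [Real.norm_of_nonneg hr.le])).mul_right _
  have hbound := norm_cohomMode_le hdioph hτ hr hK
  have hmodes : ∀ u, (fun m => cohomMode α r (u + α) m - cohomMode α r u m) =
      fun m : ℕ => r ^ m / m * Real.cos (2 * π * m * u) := by
    intro u
    funext m
    rcases Nat.eq_zero_or_pos m with rfl | hm
    · simp only [cohomMode, Nat.cast_zero, div_zero, zero_mul, sub_zero]
    · have hpos : 0 < τ / (m : ℝ) ^ κ := by positivity
      exact cohomMode_add_sub r u (hpos.trans_le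
        ((hdioph.le_distToInt_natCast hm.ne').trans (distToInt_le_chord _)))
  have hcohom : ∀ u, (∑' m, cohomMode α r (u + α) m) - ∑' m, cohomMode α r u m =
      -(1 / 2) * Real.log (dampedChordSq r u) := by
    intro u
    have hsub := (Summable.of_norm_bounded hsum (hbound (u + α))).hasSum.sub
      (Summable.of_norm_bounded hsum (hbound u)).hasSum
    rw [hmodes] at hsub
    exact hsub.unique (hasSum_log_dampedChordSq hr hr1 u)
  refine ⟨fun u => -2 * ∑' m, cohomMode α r u m,
    2 * ∑' m : ℕ, (m : ℝ) ^ K * r ^ m * (1 / τ), fun u => ?_, fun u => ?_⟩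
  · rw [abs_mul, abs_neg, abs_two]
    gcongr
    have habs := tsum_of_norm_bounded hsum.hasSum (hbound u)
    rwa [Real.norm_eq_abs] at habs
  · linear_combination 2 * hcohom u

lemma abs_sum_Ico_coboundary_le {f h : ℝ → ℝ} {α S : ℝ} (hS : ∀ u, |h u| ≤ S)
    (hf : ∀ u, f u = h (u + α) - h u) (t : ℝ) (a : ℤ) (N : ℕ) :
    |∑ i ∈ Finset.Ico a (a + N), f (t + i * α)| ≤ 2 * S := by
  have htelescope : ∑ i ∈ Finset.Ico a (a + N), f (t + i * α) =
      h (t + (a + N) * α) - h (t + a * α) := by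
    induction N with
    | zero => simp
    | succ n ih =>
      rw [Nat.cast_succ, ← add_assoc,
        ← Finset.insert_Ico_right_eq_Ico_add_one (by omega : a ≤ a + n),
        Finset.sum_insert Finset.right_notMem_Ico, ih, hf]
      push_cast
      rw [show t + ((a : ℝ) + n) * α + α = t + (a + (n + 1)) * α by ring]
      ring
  rw [htelescope]
  linarith [abs_sub (h (t + (a + N) * α)) (h (t + a * α)), hS (t + (a + N) * α), hS (t + a * α)]

lemma abs_sum_erase_le {ι : Type*} [DecidableEq ι] (s : Finset ι) (j : ι) {f : ι → ℝ} {B : ℝ}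
    (hB : 0 ≤ B) (hf : ∀ i, |f i| ≤ B) : |∑ i ∈ s.erase j, f i| ≤ |∑ i ∈ s, f i| + B := by
  by_cases hj : j ∈ s
  · rw [← Finset.add_sum_erase s f hj]
    have := abs_sub (f j + ∑ i ∈ s.erase j, f i) (f j)
    rw [add_sub_cancel_left] at this
    linarith [hf j]
  · rw [Finset.erase_eq_of_notMem hj]
    linarith

lemma exists_abs_sum_erase_log_dampedChordSq_le {α : ℝ} (hα : IsDiophantine α) {r : ℝ}
    (hr : 0 < r) (hr1 : r < 1) :
    ∃ C : ℝ, 0 ≤ C ∧ ∀ (t : ℝ) (a : ℤ) (N : ℕ) (j : ℤ),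
      |∑ i ∈ (Finset.Ico a (a + N)).erase j, Real.log (dampedChordSq r (t + i * α))| ≤ C := by
  obtain ⟨h, S, hS, hh⟩ := exists_bounded_coboundary_log_dampedChordSq hα hr hr1
  obtain ⟨B, hB, hlog⟩ := exists_abs_log_dampedChordSq_le hr hr1
  refine ⟨2 * S + B, ?_, fun t a N j => ?_⟩
  · linarith [(abs_nonneg _).trans (hS 0)]
  · refine (abs_sum_erase_le _ j hB fun i => hlog (t + i * α)).trans ?_
    gcongr
    exact abs_sum_Ico_coboundary_le hS hh t a N

/-! ### Products of chords along an orbit: the upper bound -/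

lemma chord_le_exp_log_dampedChordSq {r : ℝ} (hr : 0 < r) (hr1 : r < 1) (u : ℝ) :
    chord u ≤ Real.exp ((Real.log (dampedChordSq r u) - Real.log r) / 2) := by
  refine (sq_le_sq₀ (chord_nonneg u) (Real.exp_pos _).le).1 ?_
  rw [← Real.exp_nat_mul, Nat.cast_two, mul_div_cancel₀ _ two_ne_zero, Real.exp_sub,
    Real.exp_log (dampedChordSq_pos hr hr1 u), Real.exp_log hr, le_div_iff₀ hr, mul_comm]
  exact mul_chord_sq_le_dampedChordSq r u

lemma exists_prod_chord_erase_le {α : ℝ} (hα : IsDiophantine α) {ε : ℝ} (hε : 0 < ε) :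
    ∃ C : ℝ, ∀ (t : ℝ) (a : ℤ) (N : ℕ) (j : ℤ),
      ∏ i ∈ (Finset.Ico a (a + N)).erase j, chord (t + i * α) ≤ Real.exp (ε * N + C) := by
  have hr1 : Real.exp (-(2 * ε)) < 1 := by rw [Real.exp_lt_one_iff]; linarith
  obtain ⟨C, hC0, hC⟩ := exists_abs_sum_erase_log_dampedChordSq_le hα (Real.exp_pos _) hr1
  refine ⟨C, fun t a N j => ?_⟩
  set r := Real.exp (-(2 * ε)) with hr
  set s := (Finset.Ico a (a + (N : ℤ))).erase j
  have hcard : (s.card : ℝ) ≤ N := by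
    exact_mod_cast (Finset.card_erase_le).trans (by simp)
  have hlog : ∑ i ∈ s, (Real.log (dampedChordSq r (t + i * α)) - Real.log r) / 2 =
      (∑ i ∈ s, Real.log (dampedChordSq r (t + i * α))) / 2 + ε * s.card := by
    rw [← Finset.sum_div, Finset.sum_sub_distrib, Finset.sum_const, nsmul_eq_mul, hr, Real.log_exp]
    ring
  calc ∏ i ∈ s, chord (t + i * α)
      ≤ ∏ i ∈ s, Real.exp ((Real.log (dampedChordSq r (t + i * α)) - Real.log r) / 2) :=
        Finset.prod_le_prod (fun i _ => chord_nonneg _)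
          fun i _ => chord_le_exp_log_dampedChordSq (Real.exp_pos _) hr1 _
    _ = Real.exp (∑ i ∈ s, (Real.log (dampedChordSq r (t + i * α)) - Real.log r) / 2) :=
        (Real.exp_sum _ _).symm
    _ ≤ Real.exp (ε * N + C) := by
        rw [hlog, Real.exp_le_exp]
        linarith [(abs_le.1 (hC t a N j)).2, mul_le_mul_of_nonneg_left hcard hε.le]

/-! ### Products of chords along an orbit: the lower bound -/

lemma card_le_div_of_gap {S : Finset ℕ} {N M : ℕ} (hM : 0 < M) (hS : ∀ n ∈ S, M ≤ n ∧ n ≤ N)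
    (hgap : ∀ n ∈ S, ∀ n' ∈ S, n < n' → n + M ≤ n') : S.card ≤ N / M := by
  have hlt : ∀ n ∈ S, ∀ n' ∈ S, n < n' → n / M < n' / M := fun n hn n' hn' h =>
    (Nat.lt_succ_self _).trans_le
      ((Nat.add_div_right n hM).symm.trans_le (Nat.div_le_div_right (hgap n hn n' hn' h)))
  calc S.card ≤ (Finset.Icc 1 (N / M)).card := by
        refine Finset.card_le_card_of_injOn (fun n => n / M) (fun n hn => ?_)
          fun n hn n' hn' heq => ?_
        · exact Finset.mem_coe.2 (Finset.mem_Icc.2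
            ⟨(Nat.one_le_div_iff hM).2 (hS n hn).1, Nat.div_le_div_right (hS n hn).2⟩)
        · rcases lt_trichotomy n n' with h | h | h
          · exact absurd heq (hlt n hn n' hn' h).ne
          · exact h
          · exact absurd heq (hlt n' hn' n hn h).ne'
    _ = N / M := by rw [Nat.card_Icc, Nat.add_sub_cancel]

namespace DiophantineWith

variable {κ τ α : ℝ}

lemma rpow_lt_of_distToInt_lt (h : DiophantineWith κ τ α) (hκ : 0 < κ) (hτ : 0 < τ) {d : ℝ}
    (hd : 0 < d) {n : ℕ} (hn : n ≠ 0) (hnd : distToInt (n * α) < d) :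
    (τ / d) ^ (1 / κ) < n := by
  have hn0 : (0 : ℝ) < n := by exact_mod_cast Nat.pos_of_ne_zero hn
  have hpow : τ / d < (n : ℝ) ^ κ := by
    have := (h.le_distToInt_natCast hn).trans_lt hnd
    rw [div_lt_iff₀ (by positivity)] at this ⊢
    linarith
  have hroot := Real.rpow_lt_rpow (by positivity) hpow (one_div_pos.2 hκ)
  rwa [← Real.rpow_mul hn0.le, mul_one_div_cancel hκ.ne', Real.rpow_one] at hroot

lemma card_filter_distToInt_lt_le (h : DiophantineWith κ τ α) (hκ : 0 < κ) (hτ : 0 < τ) (N : ℕ)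
    {d : ℝ} (hd : 0 < d) :
    (((Finset.Icc 1 N).filter fun n : ℕ => distToInt (n * α) < d).card : ℝ)
      ≤ N * (2 * d / τ) ^ (1 / κ) := by
  set X := (τ / (2 * d)) ^ (1 / κ) with hX
  have hX0 : 0 < X := by positivity
  have hlarge : ∀ n : ℕ, n ≠ 0 → distToInt (n * α) < 2 * d → ⌈X⌉₊ ≤ n := fun n hn hnd =>
    Nat.ceil_le.2 (h.rpow_lt_of_distToInt_lt hκ hτ (by positivity) hn hnd).le
  have hcard : ((Finset.Icc 1 N).filter fun n : ℕ => distToInt (n * α) < d).card ≤ N / ⌈X⌉₊ := by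
    refine card_le_div_of_gap (Nat.ceil_pos.2 hX0) (fun n hn => ?_) fun n hn n' hn' hlt => ?_
    all_goals simp only [Finset.mem_filter, Finset.mem_Icc] at hn
    · exact ⟨hlarge n (by omega) (by linarith [hn.2]), hn.1.2⟩
    · simp only [Finset.mem_filter, Finset.mem_Icc] at hn'
      have := hlarge (n' - n) (by omega) (by
        rw [Nat.cast_sub hlt.le, sub_mul]
        linarith [distToInt_sub_le (n' * α) (n * α)])
      omega
  calc (((Finset.Icc 1 N).filter fun n : ℕ => distToInt (n * α) < d).card : ℝ)
      ≤ ((N / ⌈X⌉₊ : ℕ) : ℝ) := by exact_mod_cast hcard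
    _ ≤ N / ⌈X⌉₊ := Nat.cast_div_le
    _ ≤ N / X := by
        gcongr
        exact Nat.le_ceil X
    _ = N * (2 * d / τ) ^ (1 / κ) := by
        rw [hX, div_eq_mul_inv, ← Real.inv_rpow (by positivity), inv_div]

end DiophantineWith

lemma log_one_add_four_pow_le {k : ℕ} (hk : 1 ≤ k) : Real.log (1 + 4 ^ k) ≤ 3 * k := by
  have hk' : (1 : ℝ) ≤ k := by exact_mod_cast hk
  calc Real.log (1 + 4 ^ k) ≤ Real.log (2 ^ (2 * k + 1)) := by
        apply Real.log_le_log (by positivity)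
        have : (1 : ℝ) ≤ 4 ^ k := one_le_pow₀ (by norm_num)
        rw [pow_succ, pow_mul]
        norm_num
        linarith
    _ ≤ 3 * k := by
        rw [Real.log_pow]
        push_cast
        nlinarith [Real.log_two_lt_d9]

/-- Layer-cake estimate: the number of dyadic scales `s / 2 ^ l` above `d` controls the logarithmic
singularity of the left-hand side at `d = 0`. -/
lemma log_one_add_sq_div_sq_le {s d : ℝ} (hs : 0 < s) (hs1 : s ≤ 1) (hd : 0 < d) {L : ℕ}
    (hL : s * (1 / 2) ^ L ≤ d) :
    Real.log (1 + (s ^ 2) ^ 2 / d ^ 2) ≤ s ^ 2 +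
      3 * ∑ l ∈ Finset.range L, if d < s * (1 / 2) ^ l then (1 : ℝ) else 0 := by
  have hs2 : s ^ 2 ≤ 1 := pow_le_one₀ hs.le hs1
  induction L with
  | zero =>
    rw [pow_zero, mul_one] at hL
    have hratio : (s ^ 2) ^ 2 / d ^ 2 ≤ s ^ 2 := by
      rw [div_le_iff₀ (by positivity), sq (s ^ 2)]
      gcongr
    have hlog := Real.log_le_sub_one_of_pos (show 0 < 1 + (s ^ 2) ^ 2 / d ^ 2 by positivity)
    rw [Finset.sum_range_zero, mul_zero]
    linarith
  | succ L ih =>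
    by_cases hprev : s * (1 / 2) ^ L ≤ d
    · have hnonneg : (0 : ℝ) ≤ if d < s * (1 / 2) ^ L then (1 : ℝ) else 0 := by
        split_ifs <;> norm_num
      rw [Finset.sum_range_succ]
      linarith [ih hprev]
    · have hall : ∀ l ∈ Finset.range (L + 1),
          (if d < s * (1 / 2) ^ l then (1 : ℝ) else 0) = 1 := by
        intro l hl
        refine if_pos ((not_le.1 hprev).trans_le ?_)
        gcongr 1
        exact pow_le_pow_of_le_one (by norm_num) (by norm_num)
          (Nat.lt_succ_iff.1 (Finset.mem_range.1 hl))
      have hratio : (s ^ 2) ^ 2 / d ^ 2 ≤ 4 ^ (L + 1) := by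
        rw [div_le_iff₀ (by positivity)]
        calc (s ^ 2) ^ 2 ≤ s ^ 2 := by nlinarith [sq_nonneg s]
          _ = 4 ^ (L + 1) * (s * (1 / 2) ^ (L + 1)) ^ 2 := by
              rw [mul_pow, ← pow_mul, mul_comm (L + 1) 2, pow_mul, mul_left_comm, ← mul_pow]
              norm_num
          _ ≤ 4 ^ (L + 1) * d ^ 2 := by gcongr
      have hlog : Real.log (1 + (s ^ 2) ^ 2 / d ^ 2) ≤ 3 * ((L + 1 : ℕ) : ℝ) :=
        (Real.log_le_log (by positivity) (by linarith)).trans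
          (log_one_add_four_pow_le (Nat.le_add_left 1 L))
      rw [Finset.sum_congr rfl hall, Finset.sum_const, Finset.card_range, nsmul_one]
      linarith [sq_nonneg s]

lemma DiophantineWith.sum_log_one_add_sq_div_le {κ τ α : ℝ} (h : DiophantineWith κ τ α)
    (hκ : 0 < κ) (hτ : 0 < τ) {s : ℝ} (hs : 0 < s) (hs1 : s ≤ 1) (N : ℕ) :
    ∑ n ∈ Finset.Icc 1 N, Real.log (1 + (s ^ 2) ^ 2 / distToInt (n * α) ^ 2) ≤
      (s ^ 2 + 3 * ((2 / τ) ^ (1 / κ) * s ^ (1 / κ) * (1 - (1 / 2) ^ (1 / κ))⁻¹)) * N := by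
  set q : ℝ := (1 / 2) ^ (1 / κ) with hq
  set A := (2 / τ) ^ (1 / κ)
  have hq1 : q < 1 := Real.rpow_lt_one (by norm_num) (by norm_num) (by positivity)
  have hpos : ∀ n ∈ Finset.Icc 1 N, 0 < distToInt ((n : ℝ) * α) := fun n hn => by
    have hn0 : 0 < n := (Finset.mem_Icc.1 hn).1
    exact lt_of_lt_of_le (by positivity) (h.le_distToInt_natCast hn0.ne')
  obtain ⟨L, hL⟩ : ∃ L : ℕ, ∀ n ∈ Finset.Icc 1 N, s * (1 / 2) ^ L ≤ distToInt ((n : ℝ) * α) := by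
    have hlim : Tendsto (fun L : ℕ => s * (1 / 2 : ℝ) ^ L) atTop (nhds 0) := by
      simpa using (tendsto_pow_atTop_nhds_zero_of_lt_one (r := (1 / 2 : ℝ))
        (by norm_num) (by norm_num)).const_mul s
    exact ((Filter.eventually_all_finset _).2 fun n hn =>
      (hlim.eventually (gt_mem_nhds (hpos n hn))).mono fun _ => le_of_lt).exists
  have hlevel : ∀ l : ℕ, (2 * (s * (1 / 2) ^ l) / τ) ^ (1 / κ) = A * s ^ (1 / κ) * q ^ l := by
    intro l
    rw [show 2 * (s * (1 / 2) ^ l) / τ = 2 / τ * s * (1 / 2) ^ l by ring,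
      Real.mul_rpow (by positivity) (by positivity), Real.mul_rpow (by positivity) hs.le,
      hq, ← Real.rpow_natCast, ← Real.rpow_natCast, ← Real.rpow_mul (by norm_num),
      ← Real.rpow_mul (by norm_num), mul_comm (l : ℝ)]
  calc ∑ n ∈ Finset.Icc 1 N, Real.log (1 + (s ^ 2) ^ 2 / distToInt (n * α) ^ 2)
      ≤ ∑ n ∈ Finset.Icc 1 N, (s ^ 2 + 3 * ∑ l ∈ Finset.range L,
          if distToInt ((n : ℝ) * α) < s * (1 / 2) ^ l then (1 : ℝ) else 0) :=
        Finset.sum_le_sum fun n hn => log_one_add_sq_div_sq_le hs hs1 (hpos n hn) (hL n hn)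
    _ = s ^ 2 * N + 3 * ∑ l ∈ Finset.range L, (((Finset.Icc 1 N).filter
          fun n : ℕ => distToInt (n * α) < s * (1 / 2) ^ l).card : ℝ) := by
        rw [Finset.sum_add_distrib, ← Finset.mul_sum, Finset.sum_comm]
        simp only [Finset.sum_boole, Finset.sum_const, Nat.card_Icc, nsmul_eq_mul,
          Nat.add_sub_cancel, mul_comm (N : ℝ)]
    _ ≤ s ^ 2 * N + 3 * ∑ l ∈ Finset.range L, N * (A * s ^ (1 / κ) * q ^ l) := by
        gcongr with l
        exact (h.card_filter_distToInt_lt_le hκ hτ N (by positivity)).trans_eq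
          (by rw [hlevel])
    _ = s ^ 2 * N + 3 * (N * (A * s ^ (1 / κ) * ∑ l ∈ Finset.range L, q ^ l)) := by
        simp only [Finset.mul_sum]
    _ ≤ s ^ 2 * N + 3 * (N * (A * s ^ (1 / κ) * (1 - q)⁻¹)) := by
        gcongr
        rw [← tsum_geometric_of_lt_one (by positivity) hq1]
        exact (summable_geometric_of_lt_one (by positivity) hq1).sum_le_tsum _
          fun i _ => by positivity
    _ = (s ^ 2 + 3 * (A * s ^ (1 / κ) * (1 - q)⁻¹)) * N := by ring

lemma IsDiophantine.exists_sum_log_one_add_sq_div_le {α : ℝ} (hα : IsDiophantine α) {ε : ℝ}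
    (hε : 0 < ε) :
    ∃ ρ : ℝ, 0 < ρ ∧ ρ < 1 ∧ ∀ N : ℕ,
      ∑ n ∈ Finset.Icc 1 N, Real.log (1 + ρ ^ 2 / distToInt (n * α) ^ 2) ≤ ε * N := by
  obtain ⟨κ, τ, hκ, hτ, h⟩ := hα.exists_diophantineWith
  have hcont : Continuous fun s : ℝ =>
      s ^ 2 + 3 * ((2 / τ) ^ (1 / κ) * s ^ (1 / κ) * (1 - (1 / 2) ^ (1 / κ))⁻¹) := by
    have : Continuous fun s : ℝ => s ^ (1 / κ) := Real.continuous_rpow_const (by positivity)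
    fun_prop
  have hlim := hcont.tendsto 0
  rw [Real.zero_rpow (by positivity), zero_pow two_ne_zero, mul_zero, zero_mul, mul_zero,
    add_zero] at hlim
  have hsmall : ∀ᶠ s : ℝ in nhdsWithin 0 (Set.Ioi 0), s < 1 ∧
      s ^ 2 + 3 * ((2 / τ) ^ (1 / κ) * s ^ (1 / κ) * (1 - (1 / 2) ^ (1 / κ))⁻¹) < ε :=
    nhdsWithin_le_nhds ((gt_mem_nhds one_pos).and (hlim.eventually (gt_mem_nhds hε)))
  obtain ⟨s, ⟨hs1, hsε⟩, hs⟩ := (hsmall.and self_mem_nhdsWithin).exists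
  have hs0 : 0 < s := hs
  refine ⟨s ^ 2, by positivity, by nlinarith, fun N => ?_⟩
  refine (h.sum_log_one_add_sq_div_le hκ hτ hs0 hs1.le N).trans ?_
  gcongr

lemma sum_natAbs_sub_le_sum_Icc {F : ℕ → ℝ} (hF : ∀ n, 0 ≤ F n) {S : Finset ℤ} {c : ℤ} {N : ℕ}
    (hS : ∀ i ∈ S, (i - c).natAbs ∈ Finset.Icc 1 N)
    (hinj : Set.InjOn (fun i : ℤ => (i - c).natAbs) S) :
    ∑ i ∈ S, F (i - c).natAbs ≤ ∑ n ∈ Finset.Icc 1 N, F n := by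
  rw [← Finset.sum_image (f := F) hinj]
  exact Finset.sum_le_sum_of_subset_of_nonneg (Finset.image_subset_iff.2 hS) fun n _ _ => hF n

lemma sum_erase_natAbs_sub_le {F : ℕ → ℝ} (hF : ∀ n, 0 ≤ F n) {a : ℤ} {N : ℕ} {c : ℤ}
    (hc : c ∈ Finset.Ico a (a + N)) :
    ∑ i ∈ (Finset.Ico a (a + (N : ℤ))).erase c, F (i - c).natAbs ≤
      2 * ∑ n ∈ Finset.Icc 1 N, F n := by
  have hc' := Finset.mem_Ico.1 hc
  have hsplit : (Finset.Ico a (a + (N : ℤ))).erase c =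
      Finset.Ico a c ∪ Finset.Ioo c (a + N) := by
    ext i
    simp only [Finset.mem_erase, Finset.mem_Ico, Finset.mem_union, Finset.mem_Ioo]
    omega
  have hdisj : Disjoint (Finset.Ico a c) (Finset.Ioo c (a + N)) := by
    rw [Finset.disjoint_left]
    intro i
    simp only [Finset.mem_Ico, Finset.mem_Ioo]
    omega
  rw [hsplit, Finset.sum_union hdisj, two_mul]
  refine add_le_add (sum_natAbs_sub_le_sum_Icc hF ?_ ?_) (sum_natAbs_sub_le_sum_Icc hF ?_ ?_)
  · intro i hi
    simp only [Finset.mem_Ico, Finset.mem_Icc] at hi ⊢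
    omega
  · intro i hi j hj hij
    simp only [Finset.coe_Ico, Set.mem_Ico] at hi hj hij
    omega
  · intro i hi
    simp only [Finset.mem_Ioo, Finset.mem_Icc] at hi ⊢
    omega
  · intro i hi j hj hij
    simp only [Finset.coe_Ioo, Set.mem_Ioo] at hi hj hij
    omega

lemma exp_log_dampedChordSq_sub_le_chord {r : ℝ} (hr : 0 < r) (hr1 : r < 1) {D u : ℝ}
    (hD : 0 < D) (hDu : D ≤ chord u) :
    Real.exp ((Real.log (dampedChordSq r u) - Real.log (1 + (1 - r) ^ 2 / D ^ 2)) / 2) ≤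
      chord u := by
  refine (sq_le_sq₀ (Real.exp_pos _).le (chord_nonneg u)).1 ?_
  rw [← Real.exp_nat_mul, Nat.cast_two, mul_div_cancel₀ _ two_ne_zero, Real.exp_sub,
    Real.exp_log (dampedChordSq_pos hr hr1 u), Real.exp_log (by positivity),
    div_le_iff₀ (by positivity)]
  have hratio : (1 - r) ^ 2 ≤ chord u ^ 2 * ((1 - r) ^ 2 / D ^ 2) := by
    rw [mul_div_assoc', le_div_iff₀ (by positivity), mul_comm]
    gcongr
  rw [dampedChordSq]
  nlinarith [sq_nonneg (chord u)]

/-- Away from the point `c` nearest to `ℤ`, the orbit satisfies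
`‖(i - c) α‖ ≤ 2 ‖t + i α‖ ≤ chord (t + i α)`, so only the differences `(i - c) α` matter. -/
lemma exists_le_prod_chord_erase_nearest {α : ℝ} (hα : IsDiophantine α) {ε : ℝ} (hε : 0 < ε) :
    ∃ C : ℝ, 0 ≤ C ∧ ∀ (t : ℝ) (a : ℤ) (N : ℕ) (c : ℤ), c ∈ Finset.Ico a (a + N) →
      (∀ i ∈ Finset.Ico a (a + (N : ℤ)), distToInt (t + c * α) ≤ distToInt (t + i * α)) →
      Real.exp (-(ε * N + C)) ≤ ∏ i ∈ (Finset.Ico a (a + N)).erase c, chord (t + i * α) := by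
  obtain ⟨ρ, hρ0, hρ1, hρ⟩ := hα.exists_sum_log_one_add_sq_div_le hε
  have hr : 0 < 1 - ρ := by linarith
  have hr1 : 1 - ρ < 1 := by linarith
  obtain ⟨C, hC0, hC⟩ := exists_abs_sum_erase_log_dampedChordSq_le hα hr hr1
  refine ⟨C, hC0, fun t a N c hc hmin => ?_⟩
  set B := (Finset.Ico a (a + (N : ℤ))).erase c
  set F : ℕ → ℝ := fun n => Real.log (1 + ρ ^ 2 / distToInt (n * α) ^ 2)
  have hF : ∀ n, 0 ≤ F n := fun n => Real.log_nonneg (le_add_of_nonneg_right (by positivity))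
  have hterm : ∀ i ∈ B, Real.exp ((Real.log (dampedChordSq (1 - ρ) (t + i * α)) -
      F (i - c).natAbs) / 2) ≤ chord (t + i * α) := by
    intro i hi
    obtain ⟨hic, hi⟩ := Finset.mem_erase.1 hi
    have hnear := distToInt_sub_le (t + i * α) (t + c * α)
    rw [show t + i * α - (t + c * α) = ((i - c : ℤ) : ℝ) * α by push_cast; ring] at hnear
    have hchord : distToInt (((i - c : ℤ) : ℝ) * α) ≤ chord (t + i * α) := by
      linarith [hmin i hi, four_mul_distToInt_le_chord (t + i * α), distToInt_nonneg (t + i * α)]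
    simp only [F]
    rw [distToInt_natAbs_mul]
    simpa only [sub_sub_cancel] using exp_log_dampedChordSq_sub_le_chord hr hr1
      (hα.distToInt_pos (sub_ne_zero.2 hic)) hchord
  calc Real.exp (-(ε * N + C))
      ≤ Real.exp (∑ i ∈ B, (Real.log (dampedChordSq (1 - ρ) (t + i * α)) -
          F (i - c).natAbs) / 2) := by
        rw [Real.exp_le_exp, ← Finset.sum_div, Finset.sum_sub_distrib]
        linarith [sum_erase_natAbs_sub_le hF hc, hρ N, (abs_le.1 (hC t a N c)).1]
    _ = ∏ i ∈ B, Real.exp ((Real.log (dampedChordSq (1 - ρ) (t + i * α)) -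
          F (i - c).natAbs) / 2) := Real.exp_sum _ _
    _ ≤ ∏ i ∈ B, chord (t + i * α) :=
        Finset.prod_le_prod (fun i _ => (Real.exp_pos _).le) hterm

lemma prod_erase_le_mul_prod_erase_erase {ι : Type*} [DecidableEq ι] {B : Finset ι} {f : ι → ℝ}
    {c : ℝ} (hf : ∀ i, 0 ≤ f i) (hfc : ∀ i, f i ≤ c) (hc : 1 ≤ c) (j : ι) :
    ∏ i ∈ B, f i ≤ c * ∏ i ∈ B.erase j, f i := by
  have hnonneg : 0 ≤ ∏ i ∈ B.erase j, f i := Finset.prod_nonneg fun i _ => hf i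
  by_cases hj : j ∈ B
  · rw [← Finset.mul_prod_erase _ f hj]
    exact mul_le_mul_of_nonneg_right (hfc j) hnonneg
  · rw [Finset.erase_eq_of_notMem hj] at hnonneg ⊢
    exact le_mul_of_one_le_left hnonneg hc

lemma exists_le_prod_chord_erase {α : ℝ} (hα : IsDiophantine α) {ε : ℝ} (hε : 0 < ε) :
    ∃ C : ℝ, ∀ (t : ℝ) (a : ℤ) (N : ℕ) (j : ℤ) (η : ℝ), 0 < η → η ≤ 1 →
      (∀ i ∈ (Finset.Ico a (a + (N : ℤ))).erase j, η ≤ chord (t + i * α)) →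
      η * Real.exp (-(ε * N + C)) ≤ ∏ i ∈ (Finset.Ico a (a + N)).erase j, chord (t + i * α) := by
  obtain ⟨C, hC0, hC⟩ := exists_le_prod_chord_erase_nearest hα hε
  refine ⟨C + Real.log 2, fun t a N j η hη hη1 hchord => ?_⟩
  have hexp : Real.exp (-(ε * N + (C + Real.log 2))) = Real.exp (-(ε * N + C)) / 2 := by
    rw [← add_assoc, neg_add, ← sub_eq_add_neg, Real.exp_sub, Real.exp_log two_pos]
  rw [hexp]
  set X := Real.exp (-(ε * N + C))
  have hX0 : 0 < X := Real.exp_pos _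
  set B := Finset.Ico a (a + (N : ℤ))
  rcases B.eq_empty_or_nonempty with hB | hB
  · have hX1 : X ≤ 1 := Real.exp_le_one_iff.2 (neg_nonpos.2 (by positivity))
    rw [hB, Finset.erase_empty, Finset.prod_empty]
    nlinarith
  obtain ⟨c, hc, hmin⟩ := Finset.exists_min_image B (fun i : ℤ => distToInt (t + i * α)) hB
  have hnearest : X ≤ ∏ i ∈ B.erase c, chord (t + i * α) := hC t a N c hc hmin
  by_cases hcj : c = j
  · subst hcj
    nlinarith
  have hcmem : c ∈ B.erase j := Finset.mem_erase.2 ⟨hcj, hc⟩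
  have herase := prod_erase_le_mul_prod_erase_erase (B := B.erase c)
    (fun i : ℤ => chord_nonneg (t + i * α)) (fun i => chord_le_two _) one_le_two j
  rw [Finset.erase_right_comm] at herase
  calc η * (X / 2)
      ≤ chord (t + c * α) * ∏ i ∈ (B.erase j).erase c, chord (t + i * α) := by
        gcongr
        · exact chord_nonneg _
        · exact hchord c hcmem
        · linarith
    _ = ∏ i ∈ B.erase j, chord (t + i * α) :=
        Finset.mul_prod_erase _ (fun i : ℤ => chord (t + i * α)) hcmem

/-! ### Trigonometric polynomials -/

section TrigPolynomial

open Polynomial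

/-- `f` is a real trigonometric polynomial of period `1` and degree at most `k`, written through
polynomials in `cos` and `sin`, whose two coefficients of degree `k` have square sum `A ^ 2`. -/
def IsTrigPolynomial (k : ℕ) (A : ℝ) (f : ℝ → ℝ) : Prop :=
  ∃ P Q : ℝ[X],
    (∀ s, f s = P.eval (Real.cos (2 * π * s)) +
      Real.sin (2 * π * s) * Q.eval (Real.cos (2 * π * s))) ∧
    (∀ i, k < i → P.coeff i = 0) ∧ (∀ i, k ≤ i → Q.coeff i = 0) ∧
    P.coeff k ^ 2 + (X * Q).coeff k ^ 2 = A ^ 2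

namespace IsTrigPolynomial

variable {k : ℕ} {A : ℝ} {f : ℝ → ℝ}

lemma const (c : ℝ) : IsTrigPolynomial 0 c fun _ => c :=
  ⟨C c, 0, by simp, fun i hi => coeff_C_of_ne_zero hi.ne', by simp, by simp⟩

lemma succ_zero (hf : IsTrigPolynomial k A f) : IsTrigPolynomial (k + 1) 0 f := by
  obtain ⟨P, Q, heq, hP, hQ, -⟩ := hf
  refine ⟨P, Q, heq, fun i hi => hP i (by omega), fun i hi => hQ i (by omega), ?_⟩
  rw [coeff_X_mul, hP _ k.lt_succ_self, hQ _ le_rfl]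
  ring

/-- The two top coefficients of the product are those of `f`, rotated by the angle `2πβ` and scaled
by `a`. -/
lemma sub_mul_cos_mul_sub {B : ℝ} {g : ℝ → ℝ} (hf : IsTrigPolynomial k A f)
    (hg : IsTrigPolynomial k B g) (c a β : ℝ) :
    IsTrigPolynomial (k + 1) (a * A)
      fun s => (c - a * Real.cos (2 * π * (s + β))) * f s - g s := by
  obtain ⟨P, Q, heq, hP, hQ, htop⟩ := hf
  obtain ⟨P₀, Q₀, heq₀, hP₀, hQ₀, -⟩ := hg
  set w := 2 * π * β with hw
  refine ⟨C c * P - C (a * Real.cos w) * (X * P) + C (a * Real.sin w) * (Q - X * (X * Q)) - P₀,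
    C c * Q - C (a * Real.cos w) * (X * Q) + C (a * Real.sin w) * P - Q₀,
    fun s => ?_, fun i hi => ?_, fun i hi => ?_, ?_⟩
  · simp only [heq, heq₀, mul_add, ← hw, Real.cos_add, eval_sub, eval_add, eval_mul, eval_C, eval_X]
    linear_combination a * Real.sin w * eval (Real.cos (2 * π * s)) Q *
      Real.sin_sq_add_cos_sq (2 * π * s)
  · obtain ⟨j, rfl⟩ : ∃ j, i = j + 2 := ⟨i - 2, by omega⟩
    simp only [coeff_sub, coeff_add, coeff_C_mul, coeff_X_mul]
    rw [hP _ (by omega), hP _ (by omega), hQ _ (by omega), hQ _ (by omega), hP₀ _ (by omega)]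
    simp
  · obtain ⟨j, rfl⟩ : ∃ j, i = j + 1 := ⟨i - 1, by omega⟩
    simp only [coeff_sub, coeff_add, coeff_C_mul, coeff_X_mul]
    rw [hP _ (by omega), hQ _ (by omega), hQ _ (by omega), hQ₀ _ (by omega)]
    simp
  · simp only [coeff_sub, coeff_add, coeff_C_mul, coeff_X_mul]
    rw [hP (k + 1) (by omega), hP₀ (k + 1) (by omega), hQ (k + 1) (by omega), hQ k le_rfl,
      hQ₀ k le_rfl, mul_pow, ← htop]
    linear_combination a ^ 2 * (P.coeff k ^ 2 + (X * Q).coeff k ^ 2) * Real.sin_sq_add_cos_sq w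

lemma exists_eval_cos_of_even (hf : IsTrigPolynomial k A f) (heven : ∀ s, f (-s) = f s) :
    ∃ P : ℝ[X], P.natDegree ≤ k ∧ |P.coeff k| = |A| ∧ ∀ s, f s = P.eval (Real.cos (2 * π * s)) := by
  obtain ⟨P, Q, heq, hP, -, htop⟩ := hf
  have hQ : Q = 0 := by
    refine eq_zero_of_infinite_isRoot _ ((Set.Ioo_infinite (by norm_num : (-1 : ℝ) < 1)).mono ?_)
    intro c hc
    have hangle : 2 * π * (Real.arccos c / (2 * π)) = Real.arccos c := by field_simp
    have hsin : 0 < Real.sin (Real.arccos c) := by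
      rw [Real.sin_arccos]
      exact Real.sqrt_pos.2 (by nlinarith [hc.1, hc.2])
    have hsym := heven (Real.arccos c / (2 * π))
    rw [heq, heq, mul_neg, Real.cos_neg, Real.sin_neg, hangle,
      Real.cos_arccos hc.1.le hc.2.le] at hsym
    have hprod : Real.sin (Real.arccos c) * Q.eval c = 0 := by linarith
    exact (mul_eq_zero.1 hprod).resolve_left hsin.ne'
  subst hQ
  refine ⟨P, natDegree_le_iff_coeff_eq_zero.2 hP, (sq_eq_sq_iff_abs_eq_abs _ _).1 ?_, ?_⟩
  · simpa using htop
  · simpa using heq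

end IsTrigPolynomial

lemma abs_coeff_le_of_forall_abs_eval_le {P : ℝ[X]} {k : ℕ} {B : ℝ} (hdeg : P.natDegree ≤ k)
    (hB : ∀ x ∈ Set.Icc (-1 : ℝ) 1, |P.eval x| ≤ B) : |P.coeff k| ≤ B * 2 ^ (k - 1) := by
  have hB0 : 0 ≤ B := (abs_nonneg _).trans (hB 0 (by norm_num))
  rcases hB0.eq_or_lt with rfl | hBpos
  · have hP : P = 0 := eq_zero_of_infinite_isRoot _
      ((Set.Icc_infinite (by norm_num : (-1 : ℝ) < 1)).mono fun x hx =>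
        abs_nonpos_iff.1 (hB x hx))
    simp [hP]
  · have hone_side : ∀ S : ℝ[X], S.natDegree ≤ k →
        (∀ x ∈ Set.Icc (-1 : ℝ) 1, |S.eval x| ≤ B) → S.coeff k ≤ B * 2 ^ (k - 1) := by
      intro S hS hSB
      have := Chebyshev.coeff_le_of_forall_abs_le_one (n := k) (P := C B⁻¹ * S)
        (natDegree_le_iff_degree_le.1 ((natDegree_C_mul_le _ _).trans hS)) fun x hx => by
          rw [eval_mul, eval_C, abs_mul, abs_of_pos (inv_pos.2 hBpos), inv_mul_le_iff₀ hBpos,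
            mul_one]
          exact hSB x hx
      rwa [coeff_C_mul, inv_mul_le_iff₀ hBpos] at this
    refine abs_le'.2 ⟨hone_side P hdeg hB, ?_⟩
    rw [← coeff_neg]
    exact hone_side (-P) (by rwa [natDegree_neg]) fun x hx => by
      rw [eval_neg, abs_neg]
      exact hB x hx

lemma abs_eval_le_sum_prod_div {ι : Type*} [DecidableEq ι] {P : ℝ[X]} {J : Finset ι} {v : ι → ℝ}
    (hv : Set.InjOn v J) (hdeg : P.natDegree < J.card) (t : ℝ) :
    |P.eval t| ≤ ∑ x ∈ J, |P.eval (v x)| * ∏ j ∈ J.erase x, (|t - v j| / |v x - v j|) := by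
  have hinterp := Lagrange.eq_interpolate (f := P) hv
    (degree_le_natDegree.trans_lt (by exact_mod_cast hdeg))
  conv_lhs => rw [hinterp, Lagrange.interpolate_apply, eval_finsetSum]
  refine (Finset.abs_sum_le_sum_abs _ _).trans_eq (Finset.sum_congr rfl fun x _ => ?_)
  rw [eval_mul, eval_C, abs_mul, Lagrange.basis, eval_prod, Finset.abs_prod]
  congr 1
  refine Finset.prod_congr rfl fun j _ => ?_
  rw [Lagrange.basisDivisor, eval_mul, eval_C, eval_sub, eval_X, eval_C, abs_mul, abs_inv,
    div_eq_inv_mul]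

end TrigPolynomial

/-! ### Determinants of Dirichlet truncations -/

/-- The determinant of `E - H` restricted to an interval of length `k` with Dirichlet boundary
conditions, `t` being the phase at the left end of the interval. -/
def dirichletDet (lam α E : ℝ) : ℕ → ℝ → ℝ
  | 0, _ => 1
  | 1, t => E - 2 * lam * Real.cos (2 * π * t)
  | k + 2, t =>
    (E - 2 * lam * Real.cos (2 * π * (t + (k + 1) * α))) * dirichletDet lam α E (k + 1) t
      - dirichletDet lam α E k t

section DirichletDet

variable (lam α E : ℝ)

lemma dirichletDet_zero (t : ℝ) : dirichletDet lam α E 0 t = 1 := rfl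

lemma dirichletDet_one (t : ℝ) :
    dirichletDet lam α E 1 t = E - 2 * lam * Real.cos (2 * π * t) := rfl

lemma dirichletDet_add_two (k : ℕ) (t : ℝ) :
    dirichletDet lam α E (k + 2) t =
      (E - 2 * lam * Real.cos (2 * π * (t + (k + 1) * α))) * dirichletDet lam α E (k + 1) t
        - dirichletDet lam α E k t := rfl

lemma dirichletDet_add_two_left (k : ℕ) (t : ℝ) :
    dirichletDet lam α E (k + 2) t =
      (E - 2 * lam * Real.cos (2 * π * t)) * dirichletDet lam α E (k + 1) (t + α)
        - dirichletDet lam α E k (t + 2 * α) := by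
  induction k using Nat.twoStepInduction with
  | zero =>
    simp only [dirichletDet_add_two, dirichletDet_zero, dirichletDet_one, Nat.cast_zero, zero_add,
      one_mul]
    ring
  | one =>
    simp only [dirichletDet_add_two, dirichletDet_zero, dirichletDet_one, Nat.cast_zero,
      Nat.cast_one, zero_add, one_mul]
    ring_nf
  | more k ih₀ ih₁ =>
    rw [dirichletDet_add_two lam α E (k + 2) t, ih₀, ih₁,
      dirichletDet_add_two lam α E (k + 1) (t + α), dirichletDet_add_two lam α E k (t + 2 * α)]
    push_cast
    rw [show t + (k + 2 + 1) * α = t + α + (k + 1 + 1) * α by ring,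
      show t + 2 * α + (k + 1) * α = t + α + (k + 1 + 1) * α by ring]
    ring

lemma dirichletDet_reflect (k : ℕ) (t : ℝ) :
    dirichletDet lam α E k (-t - (k - 1) * α) = dirichletDet lam α E k t := by
  induction k using Nat.twoStepInduction generalizing t with
  | zero => rfl
  | one => simp only [dirichletDet_one, Nat.cast_one, sub_self, zero_mul, sub_zero, mul_neg,
      Real.cos_neg]
  | more k ih₀ ih₁ =>
    rw [dirichletDet_add_two_left lam α E k t, dirichletDet_add_two, ← ih₀ (t + 2 * α),
      ← ih₁ (t + α)]
    push_cast
    rw [show -t - ((k : ℝ) + 2 - 1) * α + (k + 1) * α = -t by ring,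
      show -(t + α) - ((k : ℝ) + 1 - 1) * α = -t - ((k : ℝ) + 2 - 1) * α by ring,
      show -(t + 2 * α) - ((k : ℝ) - 1) * α = -t - ((k : ℝ) + 2 - 1) * α by ring, mul_neg,
      Real.cos_neg]

lemma isTrigPolynomial_dirichletDet (β : ℝ) (k : ℕ) :
    IsTrigPolynomial k ((2 * lam) ^ k) fun s => dirichletDet lam α E k (s + β) := by
  induction k using Nat.twoStepInduction with
  | zero => exact .const 1
  | one =>
    have := (IsTrigPolynomial.const 1).sub_mul_cos_mul_sub (.const 0) E (2 * lam) β
    simpa only [dirichletDet_one, pow_one, mul_one, sub_zero] using this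
  | more k ih₀ ih₁ =>
    have := ih₁.sub_mul_cos_mul_sub ih₀.succ_zero E (2 * lam) (β + (k + 1) * α)
    simpa only [dirichletDet_add_two, add_assoc, ← pow_succ'] using this

open Polynomial in
lemma exists_dirichletDet_eq_eval_cos (k : ℕ) :
    ∃ P : ℝ[X], P.natDegree ≤ k ∧ |P.coeff k| = |2 * lam| ^ k ∧
      ∀ s, dirichletDet lam α E k (s - (k - 1) * α / 2) = P.eval (Real.cos (2 * π * s)) := by
  rw [← abs_pow]
  refine (isTrigPolynomial_dirichletDet lam α E (-((k - 1) * α / 2)) k).exists_eval_cos_of_even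
    fun s => ?_
  rw [← dirichletDet_reflect]
  ring_nf

end DirichletDet

section DirichletDetBounds

variable {lam α E : ℝ}

lemma pow_abs_le_of_forall_abs_dirichletDet_le {k : ℕ} {B : ℝ}
    (hB : ∀ t, |dirichletDet lam α E k t| ≤ B) : |lam| ^ k ≤ B := by
  obtain ⟨P, hdeg, hcoeff, hP⟩ := exists_dirichletDet_eq_eval_cos lam α E k
  have hB0 : 0 ≤ B := (abs_nonneg _).trans (hB 0)
  have hPB : ∀ x ∈ Set.Icc (-1 : ℝ) 1, |P.eval x| ≤ B := by
    intro x hx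
    have hangle : 2 * π * (Real.arccos x / (2 * π)) = Real.arccos x := by field_simp
    rw [← Real.cos_arccos hx.1 hx.2, ← hangle, ← hP]
    exact hB _
  have hle := abs_coeff_le_of_forall_abs_eval_le hdeg hPB
  rw [hcoeff, abs_mul, abs_two, mul_pow] at hle
  have hpow : B * 2 ^ (k - 1) ≤ 2 ^ k * B := by
    rw [mul_comm]
    gcongr
    · norm_num
    · omega
  exact le_of_mul_le_mul_left (hle.trans hpow) (by positivity)

lemma abs_dirichletDet_le (hlam : 0 ≤ lam) (hE : |E| ≤ 2 + 2 * lam) (k : ℕ) (t : ℝ) :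
    |dirichletDet lam α E k t| ≤ (3 + 4 * lam) ^ k := by
  have hentry : ∀ u, |E - 2 * lam * Real.cos (2 * π * u)| ≤ 2 + 4 * lam := by
    intro u
    have hcos : |2 * lam * Real.cos (2 * π * u)| ≤ 2 * lam := by
      rw [abs_mul, abs_of_nonneg (by positivity)]
      exact mul_le_of_le_one_right (by positivity) (Real.abs_cos_le_one _)
    linarith [abs_sub E (2 * lam * Real.cos (2 * π * u))]
  induction k using Nat.twoStepInduction with
  | zero => simp [dirichletDet_zero]
  | one =>
    rw [dirichletDet_one, pow_one]
    linarith [hentry t]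
  | more k ih₀ ih₁ =>
    rw [dirichletDet_add_two]
    calc _ ≤ |E - 2 * lam * Real.cos (2 * π * (t + (k + 1) * α))| *
          |dirichletDet lam α E (k + 1) t| + |dirichletDet lam α E k t| := by
          rw [← abs_mul]
          exact abs_sub _ _
      _ ≤ (2 + 4 * lam) * (3 + 4 * lam) ^ (k + 1) + (3 + 4 * lam) ^ k := by
          gcongr
          exact hentry _
      _ ≤ (3 + 4 * lam) ^ (k + 2) := by
          have : (0 : ℝ) ≤ (3 + 4 * lam) ^ k := by positivity
          rw [pow_add _ k 2, pow_succ]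
          nlinarith [mul_nonneg hlam this]

/-- The supremum of `|dirichletDet lam α E k|` over all phases. -/
def dirichletDetSup (lam α E : ℝ) (k : ℕ) : ℝ := ⨆ t, |dirichletDet lam α E k t|

lemma abs_dirichletDet_le_sup (hlam : 0 ≤ lam) (hE : |E| ≤ 2 + 2 * lam) (k : ℕ) (t : ℝ) :
    |dirichletDet lam α E k t| ≤ dirichletDetSup lam α E k :=
  le_ciSup (f := fun t => |dirichletDet lam α E k t|)
    ⟨_, Set.forall_mem_range.2 (abs_dirichletDet_le hlam hE k)⟩ t

lemma dirichletDetSup_le (hlam : 0 ≤ lam) (hE : |E| ≤ 2 + 2 * lam) (k : ℕ) :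
    dirichletDetSup lam α E k ≤ (3 + 4 * lam) ^ k :=
  ciSup_le (abs_dirichletDet_le hlam hE k)

lemma pow_le_dirichletDetSup (hlam : 0 ≤ lam) (hE : |E| ≤ 2 + 2 * lam) (k : ℕ) :
    lam ^ k ≤ dirichletDetSup lam α E k := by
  simpa only [abs_of_nonneg hlam] using
    pow_abs_le_of_forall_abs_dirichletDet_le (abs_dirichletDet_le_sup hlam hE k)

lemma dirichletDetSup_pos (hlam : 0 < lam) (hE : |E| ≤ 2 + 2 * lam) (k : ℕ) :
    0 < dirichletDetSup lam α E k :=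
  (pow_pos hlam k).trans_le (pow_le_dirichletDetSup hlam.le hE k)

end DirichletDetBounds

/-- Maximising `b j * exp (-L j)` over `j ≤ R q` cannot produce some `j < q`, because the lower
bound on `b (R q)` beats the upper bound on `b j`. -/
lemma exists_scale_of_exp_le_of_le_exp {ℓ u L : ℝ} (hL : L < ℓ) (hℓu : ℓ ≤ u) :
    ∃ R : ℕ, 1 ≤ R ∧ ∀ b : ℕ → ℝ, (∀ k : ℕ, Real.exp (ℓ * k) ≤ b k) →
      (∀ k : ℕ, b k ≤ Real.exp (u * k)) → ∀ q : ℕ, ∃ k, q ≤ k ∧ k ≤ R * q ∧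
        ∀ m ≤ k, b m ≤ b k * Real.exp (-L * ((k : ℝ) - m)) := by
  have hgap : 0 < ℓ - L := sub_pos.2 hL
  obtain ⟨R, hR⟩ := exists_nat_ge ((u - L) / (ℓ - L))
  have hR1 : (1 : ℝ) ≤ R := hR.trans' ((one_le_div hgap).2 (by linarith))
  rw [div_le_iff₀ hgap] at hR
  refine ⟨R, by exact_mod_cast hR1, fun b hlow hupp q => ?_⟩
  obtain ⟨k, hk, hmax⟩ := Finset.exists_max_image (Finset.range (R * q + 1))
    (fun j : ℕ => b j * Real.exp (-L * j)) ⟨0, by simp⟩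
  have hkR : k ≤ R * q := Nat.lt_succ_iff.1 (Finset.mem_range.1 hk)
  refine ⟨k, ?_, hkR, fun m hm => ?_⟩
  · by_contra! hkq
    have hexp : Real.exp ((ℓ - L) * (R * q : ℕ)) ≤ Real.exp ((u - L) * k) :=
      calc Real.exp ((ℓ - L) * (R * q : ℕ))
          = Real.exp (ℓ * (R * q : ℕ)) * Real.exp (-L * (R * q : ℕ)) := by
            rw [← Real.exp_add]
            ring_nf
        _ ≤ b (R * q) * Real.exp (-L * (R * q : ℕ)) := by
            gcongr
            exact hlow _
        _ ≤ b k * Real.exp (-L * k) := hmax (R * q) (by simp)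
        _ ≤ Real.exp (u * k) * Real.exp (-L * k) := by
            gcongr
            exact hupp k
        _ = Real.exp ((u - L) * k) := by
            rw [← Real.exp_add]
            ring_nf
    have hle := Real.exp_le_exp.1 hexp
    push_cast at hle
    have hlt : (u - L) * k < (u - L) * q :=
      mul_lt_mul_of_pos_left (by exact_mod_cast hkq) (by linarith)
    nlinarith [(Nat.cast_nonneg q : (0 : ℝ) ≤ q)]
  · have hle := hmax m (Finset.mem_range.2 (by omega))
    calc b m = b m * Real.exp (-L * m) * Real.exp (L * m) := by
          rw [mul_assoc, ← Real.exp_add]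
          simp
      _ ≤ b k * Real.exp (-L * k) * Real.exp (L * m) := by gcongr
      _ = b k * Real.exp (-L * ((k : ℝ) - m)) := by
          rw [mul_assoc, ← Real.exp_add]
          ring_nf

/-- `k` is a scale at which `dirichletDetSup` has grown at least at rate `L` from every smaller
scale. Determinants of such a size `k` that come close to `dirichletDetSup lam α E k` turn Cramer's
rule into exponential decay of eigenfunctions. -/
def IsGrowthScale (lam α E L : ℝ) (k : ℕ) : Prop :=
  ∀ m ≤ k, dirichletDetSup lam α E m ≤ dirichletDetSup lam α E k * Real.exp (-L * ((k : ℝ) - m))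

lemma exists_isGrowthScale {lam L : ℝ} (hlam : 0 < lam) (hL : L < Real.log lam) (α : ℝ) :
    ∃ R : ℕ, 1 ≤ R ∧ ∀ E, |E| ≤ 2 + 2 * lam → ∀ q : ℕ,
      ∃ k, q ≤ k ∧ k ≤ R * q ∧ IsGrowthScale lam α E L k := by
  obtain ⟨R, hR1, hR⟩ := exists_scale_of_exp_le_of_le_exp hL
    (Real.log_le_log hlam (by linarith : lam ≤ 3 + 4 * lam))
  refine ⟨R, hR1, fun E hE => hR _ (fun k => ?_) fun k => ?_⟩
  · rw [mul_comm, Real.exp_nat_mul, Real.exp_log hlam]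
    exact pow_le_dirichletDetSup hlam.le hE k
  · rw [mul_comm, Real.exp_nat_mul, Real.exp_log (by positivity)]
    exact dirichletDetSup_le hlam.le hE k

/-! ### Expansion of eigenfunctions at the ends of an interval -/

section Cramer

variable {lam α θ E : ℝ} {φ : ℤ → ℝ}

lemma IsEigenfunction.dirichletDet_mul_sub (h : IsEigenfunction (amoPot lam α θ) E φ) (x : ℤ)
    (k : ℕ) :
    dirichletDet lam α E (k + 1) (θ + x * α) * φ (x + k)
      - dirichletDet lam α E k (θ + x * α) * φ (x + k + 1) = φ (x - 1) := by
  induction k with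
  | zero =>
    have hx := h x
    simp only [amoPot] at hx
    rw [dirichletDet_zero, zero_add, dirichletDet_one, Nat.cast_zero, add_zero]
    linarith
  | succ k ih =>
    have hx := h (x + k + 1)
    simp only [amoPot] at hx
    rw [dirichletDet_add_two, ← ih]
    push_cast at hx ⊢
    rw [show x + k + 1 - 1 = x + (k : ℤ) by ring] at hx
    rw [show θ + x * α + (k + 1) * α = θ + (x + k + 1) * α by ring, ← add_assoc x]
    linear_combination -dirichletDet lam α E (k + 1) (θ + x * α) * hx

/-- Cramer's rule for the Dirichlet problem on `[x, x + p + q]`. -/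
lemma IsEigenfunction.dirichletDet_mul_eq (h : IsEigenfunction (amoPot lam α θ) E φ) (x : ℤ)
    (p q : ℕ) :
    dirichletDet lam α E (p + 1 + q) (θ + x * α) * φ (x + p) =
      dirichletDet lam α E q (θ + (x + p + 1 : ℤ) * α) * φ (x - 1)
      + dirichletDet lam α E p (θ + x * α) * φ (x + p + 1 + q) := by
  have hbase := h.dirichletDet_mul_sub x p
  induction q using Nat.twoStepInduction with
  | zero =>
    rw [dirichletDet_zero, add_zero, Nat.cast_zero, add_zero]
    linarith
  | one =>
    have hx := h (x + p + 1)
    simp only [amoPot] at hx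
    rw [show p + 1 + 1 = p + 2 by ring, dirichletDet_add_two, dirichletDet_one]
    push_cast at hx ⊢
    rw [show x + p + 1 - 1 = x + (p : ℤ) by ring] at hx
    rw [show θ + x * α + (p + 1) * α = θ + (x + p + 1) * α by ring]
    linear_combination -dirichletDet lam α E p (θ + x * α) * hx +
      (E - 2 * lam * Real.cos (2 * π * (θ + (x + p + 1) * α))) * hbase
  | more q ih₀ ih₁ =>
    have hx := h (x + p + 1 + q + 1)
    simp only [amoPot] at hx
    rw [show p + 1 + (q + 2) = (p + 1 + q) + 2 by ring, dirichletDet_add_two,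
      dirichletDet_add_two lam α E q]
    rw [show p + 1 + (q + 1) = p + 1 + q + 1 by ring] at ih₁
    push_cast at hx ih₀ ih₁ ⊢
    rw [show x + p + 1 + q + 1 - 1 = x + (p : ℤ) + 1 + q by ring,
      show x + p + 1 + q + 1 + 1 = x + (p : ℤ) + 1 + (q + 2) by ring,
      show x + p + 1 + q + 1 = x + (p : ℤ) + 1 + (q + 1) by ring] at hx
    rw [show θ + x * α + (p + 1 + q + 1) * α = θ + (x + p + 1 + q + 1) * α by ring,
      show θ + (x + p + 1) * α + (q + 1) * α = θ + (x + p + 1 + q + 1) * α by ring]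
    linear_combination -dirichletDet lam α E p (θ + x * α) * hx - ih₀ +
      (E - 2 * lam * Real.cos (2 * π * (θ + (x + p + 1 + q + 1) * α))) * ih₁

end Cramer

/-! ### Large determinants from interpolation on the orbit -/

/-- The product of the chords from `t` to the orbit points `-j * α`, `j ∈ J`, with `j = x` omitted.
Numerators and denominators of the Lagrange basis at the points `cos (2 * π * (c + j * α))` are
products of two of these. -/
def chordProd (α : ℝ) (J : Finset ℤ) (x : ℤ) (t : ℝ) : ℝ := ∏ j ∈ J.erase x, chord (t + j * α)

lemma chordProd_nonneg (α : ℝ) (J : Finset ℤ) (x : ℤ) (t : ℝ) : 0 ≤ chordProd α J x t :=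
  Finset.prod_nonneg fun _ _ => chord_nonneg _

lemma chordProd_union {α : ℝ} {B₁ B₂ : Finset ℤ} (h : Disjoint B₁ B₂) (x : ℤ) (t : ℝ) :
    chordProd α (B₁ ∪ B₂) x t = chordProd α B₁ x t * chordProd α B₂ x t := by
  rw [chordProd, Finset.erase_union_distrib, Finset.prod_union, chordProd, chordProd]
  exact h.mono (Finset.erase_subset _ _) (Finset.erase_subset _ _)

lemma prod_abs_cos_sub_cos_erase (α c s : ℝ) (J : Finset ℤ) (x : ℤ) :
    ∏ j ∈ J.erase x, |Real.cos (2 * π * s) - Real.cos (2 * π * (c + j * α))| =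
      (∏ _j ∈ J.erase x, 1 / 2) * (chordProd α J x (c + s) * chordProd α J x (c - s)) := by
  simp only [chordProd]
  rw [← Finset.prod_mul_distrib, ← Finset.prod_mul_distrib]
  refine Finset.prod_congr rfl fun j _ => ?_
  rw [abs_cos_sub_cos_eq_chord, ← chord_neg (s - _)]
  ring_nf

lemma abs_dirichletDet_le_sum_chordProd {lam α E θ : ℝ} {k : ℕ} {J : Finset ℤ}
    (hcard : k < J.card)
    (hsum : ∀ x ∈ J, 0 < chordProd α J x (2 * θ + (x + k - 1) * α))
    (hdiff : ∀ x ∈ J, 0 < chordProd α J x (-x * α)) (t : ℝ) :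
    |dirichletDet lam α E k t| ≤ ∑ x ∈ J, |dirichletDet lam α E k (θ + x * α)| *
      (chordProd α J x (θ + t + (k - 1) * α) * chordProd α J x (θ - t) /
        (chordProd α J x (2 * θ + (x + k - 1) * α) * chordProd α J x (-x * α))) := by
  obtain ⟨P, hdeg, -, hP⟩ := exists_dirichletDet_eq_eval_cos lam α E k
  set c : ℝ := θ + (k - 1) * α / 2 with hc
  set s : ℝ := t + (k - 1) * α / 2 with hs
  set v : ℤ → ℝ := fun j => Real.cos (2 * π * (c + j * α)) with hv
  have hnodes (x : ℤ) : ∏ j ∈ J.erase x, |v x - v j| = (∏ _j ∈ J.erase x, 1 / 2) *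
      (chordProd α J x (2 * θ + (x + k - 1) * α) * chordProd α J x (-x * α)) := by
    rw [hv, prod_abs_cos_sub_cos_erase, hc]
    ring_nf
  have hinj : Set.InjOn v J := fun x hx j hj hxj => by
    by_contra hne
    have hzero : ∏ i ∈ J.erase x, |v x - v i| = 0 :=
      Finset.prod_eq_zero (Finset.mem_erase.2 ⟨Ne.symm hne, hj⟩) (by rw [hxj, sub_self, abs_zero])
    have hpos := mul_pos (hsum x hx) (hdiff x hx)
    rw [hnodes] at hzero
    exact (mul_pos (by positivity) hpos).ne' hzero
  have hlagrange := abs_eval_le_sum_prod_div hinj (hdeg.trans_lt hcard) (Real.cos (2 * π * s))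
  rw [← hP, show s - (k - 1) * α / 2 = t by rw [hs]; ring] at hlagrange
  refine hlagrange.trans_eq (Finset.sum_congr rfl fun x _ => ?_)
  rw [Finset.prod_div_distrib, hnodes, prod_abs_cos_sub_cos_erase, 
    mul_div_mul_left _ _ (by positivity), ← hP,
    show c + x * α - (k - 1) * α / 2 = θ + x * α by rw [hc]; ring,
    show c + s = θ + t + (k - 1) * α by rw [hc, hs]; ring,
    show c - s = θ - t by rw [hc, hs]; ring]

lemma exists_dirichletDetSup_mul_le {lam α E θ U : ℝ} {k : ℕ} {J : Finset ℤ}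
    (hcard : J.card = k + 1)
    (hsum : ∀ x ∈ J, 0 < chordProd α J x (2 * θ + (x + k - 1) * α))
    (hdiff : ∀ x ∈ J, 0 < chordProd α J x (-x * α)) (hU : ∀ x t, chordProd α J x t ≤ U) :
    ∃ x ∈ J, dirichletDetSup lam α E k *
        (chordProd α J x (2 * θ + (x + k - 1) * α) * chordProd α J x (-x * α)) ≤
      (k + 1) * (|dirichletDet lam α E k (θ + x * α)| * U ^ 2) := by
  set d : ℤ → ℝ := fun x =>
    chordProd α J x (2 * θ + (x + k - 1) * α) * chordProd α J x (-x * α)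
  have hd : ∀ x ∈ J, 0 < d x := fun x hx => mul_pos (hsum x hx) (hdiff x hx)
  have hsup : dirichletDetSup lam α E k ≤
      ∑ x ∈ J, |dirichletDet lam α E k (θ + x * α)| * U ^ 2 / d x := by
    refine ciSup_le fun t => ?_
    refine (abs_dirichletDet_le_sum_chordProd (by omega) hsum hdiff t).trans
      (Finset.sum_le_sum fun x hx => ?_)
    have hdx := (hd x hx).le
    rw [← mul_div_assoc, sq]
    gcongr
    · exact chordProd_nonneg α J x _
    · exact (chordProd_nonneg α J x 0).trans (hU x 0)
    · exact hU x _
    · exact hU x _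
  have hJ : J.Nonempty := Finset.card_pos.1 (by omega)
  obtain ⟨x : ℤ, hx, hmax⟩ := Finset.exists_le_of_sum_le (s := J) hJ
    (f := fun _ : ℤ => dirichletDetSup lam α E k / (k + 1))
    (g := fun x : ℤ => |dirichletDet lam α E k (θ + x * α)| * U ^ 2 / d x) (by
      rw [Finset.sum_const, hcard, nsmul_eq_mul]
      push_cast
      rwa [mul_div_cancel₀ _ (by positivity)])
  refine ⟨x, hx, ?_⟩
  rwa [div_le_div_iff₀ (by positivity) (hd x hx), mul_comm _ ((k : ℝ) + 1)] at hmax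

lemma exists_dirichletDetSup_mul_exp_le {lam α E θ u q e : ℝ} {k : ℕ} {J : Finset ℤ} {p : ℤ → ℝ}
    (hcard : J.card = k + 1) (he : 0 < e)
    (hsum : ∀ x ∈ J, Real.exp (-p x) ≤ chordProd α J x (2 * θ + (x + k - 1) * α))
    (hdiff : ∀ x ∈ J, Real.exp (-q) ≤ chordProd α J x (-x * α))
    (hU : ∀ x t, chordProd α J x t ≤ Real.exp u) :
    ∃ x ∈ J, dirichletDetSup lam α E k *
        Real.exp (-(p x + q + 2 * u + e * (k + 1 : ℕ) - Real.log e)) ≤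
      |dirichletDet lam α E k (θ + x * α)| := by
  obtain ⟨x, hx, hlarge⟩ := exists_dirichletDetSup_mul_le (lam := lam) (E := E) hcard
    (fun x hx => (Real.exp_pos _).trans_le (hsum x hx))
    (fun x hx => (Real.exp_pos _).trans_le (hdiff x hx)) hU
  refine ⟨x, hx, ?_⟩
  have hsup : 0 ≤ dirichletDetSup lam α E k := Real.iSup_nonneg fun _ => abs_nonneg _
  have hcount : (k : ℝ) + 1 ≤ Real.exp (e * (k + 1 : ℕ) - Real.log e) := by
    rw [Real.exp_sub, Real.exp_log he, le_div_iff₀ he, mul_comm]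
    push_cast
    linarith [Real.add_one_le_exp (e * ((k : ℝ) + 1))]
  calc dirichletDetSup lam α E k *
        Real.exp (-(p x + q + 2 * u + e * (k + 1 : ℕ) - Real.log e))
      = dirichletDetSup lam α E k * (Real.exp (-p x) * Real.exp (-q)) *
          Real.exp (-(e * (k + 1 : ℕ) - Real.log e + 2 * u)) := by
        rw [mul_assoc, ← Real.exp_add, ← Real.exp_add]
        ring_nf
    _ ≤ Real.exp (e * (k + 1 : ℕ) - Real.log e) *
          (|dirichletDet lam α E k (θ + x * α)| * Real.exp u ^ 2) *
          Real.exp (-(e * (k + 1 : ℕ) - Real.log e + 2 * u)) := by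
        refine mul_le_mul_of_nonneg_right ?_ (Real.exp_nonneg _)
        refine le_trans ?_ (hlarge.trans (mul_le_mul_of_nonneg_right hcount (by positivity)))
        exact mul_le_mul_of_nonneg_left (mul_le_mul (hsum x hx) (hdiff x hx)
          (Real.exp_nonneg _) (chordProd_nonneg ..)) hsup
    _ = |dirichletDet lam α E k (θ + x * α)| := by
        rw [neg_add, Real.exp_add, Real.exp_neg, Real.exp_neg, two_mul, Real.exp_add]
        field_simp

/-- `N` consecutive integers starting at `a`. -/
abbrev block (a : ℤ) (N : ℕ) : Finset ℤ := Finset.Ico a (a + N)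

section Diophantine

variable {α : ℝ}

lemma exists_chordProd_union_block_le (hα : IsDiophantine α) {ε : ℝ} (hε : 0 < ε) :
    ∃ C : ℝ, ∀ (a₁ a₂ : ℤ) (N₁ N₂ : ℕ), Disjoint (block a₁ N₁) (block a₂ N₂) → ∀ x t,
      chordProd α (block a₁ N₁ ∪ block a₂ N₂) x t ≤ Real.exp (ε * (N₁ + N₂ : ℕ) + C) := by
  obtain ⟨C, hC⟩ := exists_prod_chord_erase_le hα hε
  refine ⟨2 * C, fun a₁ a₂ N₁ N₂ hdisj x t => ?_⟩
  rw [chordProd_union hdisj]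
  calc chordProd α (block a₁ N₁) x t * chordProd α (block a₂ N₂) x t
      ≤ Real.exp (ε * N₁ + C) * Real.exp (ε * N₂ + C) :=
        mul_le_mul (hC t a₁ N₁ x) (hC t a₂ N₂ x) (chordProd_nonneg ..) (Real.exp_nonneg _)
    _ = Real.exp (ε * (N₁ + N₂ : ℕ) + 2 * C) := by
        rw [← Real.exp_add]
        push_cast
        ring_nf

lemma exists_le_chordProd_union_block (hα : IsDiophantine α) {ε : ℝ} (hε : 0 < ε) :
    ∃ C : ℝ, ∀ (a₁ a₂ : ℤ) (N₁ N₂ : ℕ), Disjoint (block a₁ N₁) (block a₂ N₂) →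
      ∀ x t g₁ g₂, 0 ≤ g₁ → 0 ≤ g₂ →
        (∀ i ∈ block a₁ N₁, i ≠ x → Real.exp (-g₁) ≤ distToInt (t + i * α)) →
        (∀ i ∈ block a₂ N₂, i ≠ x → Real.exp (-g₂) ≤ distToInt (t + i * α)) →
        Real.exp (-(g₁ + g₂ + ε * (N₁ + N₂ : ℕ) + C)) ≤
          chordProd α (block a₁ N₁ ∪ block a₂ N₂) x t := by
  obtain ⟨C, hC⟩ := exists_le_prod_chord_erase hα hε
  have hblock (a : ℤ) (N : ℕ) (x : ℤ) (t g : ℝ) (hg : 0 ≤ g)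
      (h : ∀ i ∈ block a N, i ≠ x → Real.exp (-g) ≤ distToInt (t + i * α)) :
      Real.exp (-g) * Real.exp (-(ε * N + C)) ≤ chordProd α (block a N) x t :=
    hC t a N x _ (Real.exp_pos _) (Real.exp_le_one_iff.2 (neg_nonpos.2 hg)) fun i hi =>
      (h i (Finset.mem_of_mem_erase hi) (Finset.ne_of_mem_erase hi)).trans (distToInt_le_chord _)
  refine ⟨2 * C, fun a₁ a₂ N₁ N₂ hdisj x t g₁ g₂ hg₁ hg₂ h₁ h₂ => ?_⟩
  rw [chordProd_union hdisj]
  calc Real.exp (-(g₁ + g₂ + ε * (N₁ + N₂ : ℕ) + 2 * C))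
      = Real.exp (-g₁) * Real.exp (-(ε * N₁ + C)) *
          (Real.exp (-g₂) * Real.exp (-(ε * N₂ + C))) := by
        rw [← Real.exp_add, ← Real.exp_add, ← Real.exp_add]
        push_cast
        ring_nf
    _ ≤ chordProd α (block a₁ N₁) x t * chordProd α (block a₂ N₂) x t :=
        mul_le_mul (hblock a₁ N₁ x t g₁ hg₁ h₁) (hblock a₂ N₂ x t g₂ hg₂ h₂) (by positivity)
          (chordProd_nonneg ..)

/-- If the small divisors `(i - x) * α` and `2 * θ + (x + i + k - 1) * α` of a set of `k + 1`
points consisting of two blocks are at least `exp (-g₀)`, `exp (-g₁ x)` and `exp (-g₂ x)`, some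
point of the set carries a determinant of almost maximal size. -/
theorem exists_large_dirichletDet (hα : IsDiophantine α) {ε : ℝ} (hε : 0 < ε) :
    ∃ C : ℝ, ∀ (lam E θ : ℝ) (k : ℕ) (a₁ a₂ : ℤ) (N₁ N₂ : ℕ) (g₁ g₂ : ℤ → ℝ) (g₀ : ℝ),
      N₁ + N₂ = k + 1 → Disjoint (block a₁ N₁) (block a₂ N₂) →
      0 ≤ g₀ → (∀ x, 0 ≤ g₁ x) → (∀ x, 0 ≤ g₂ x) →
      (∀ x ∈ block a₁ N₁ ∪ block a₂ N₂, ∀ i ∈ block a₁ N₁ ∪ block a₂ N₂, i ≠ x →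
        Real.exp (-g₀) ≤ distToInt ((i - x : ℤ) * α)) →
      (∀ x ∈ block a₁ N₁ ∪ block a₂ N₂, ∀ i ∈ block a₁ N₁, i ≠ x →
        Real.exp (-g₁ x) ≤ distToInt (2 * θ + (x + i + k - 1 : ℤ) * α)) →
      (∀ x ∈ block a₁ N₁ ∪ block a₂ N₂, ∀ i ∈ block a₂ N₂, i ≠ x →
        Real.exp (-g₂ x) ≤ distToInt (2 * θ + (x + i + k - 1 : ℤ) * α)) →
      ∃ x ∈ block a₁ N₁ ∪ block a₂ N₂,
        dirichletDetSup lam α E k * Real.exp (-(g₁ x + g₂ x + 2 * g₀ + ε * k + C)) ≤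
          |dirichletDet lam α E k (θ + x * α)| := by
  set e := ε / 5 with he
  have he₀ : 0 < e := by positivity
  obtain ⟨C₁, hupper⟩ := exists_chordProd_union_block_le hα he₀
  obtain ⟨C₂, hlower⟩ := exists_le_chordProd_union_block hα he₀
  refine ⟨ε + 2 * C₁ + 2 * C₂ - Real.log e, fun _ _ θ k a₁ a₂ N₁ N₂ g₁ g₂ g₀ hN hdisj hg₀ hg₁ hg₂
    hdiff hsum₁ hsum₂ => ?_⟩
  set J := block a₁ N₁ ∪ block a₂ N₂
  have hcard : J.card = k + 1 := by
    rw [Finset.card_union_of_disjoint hdisj, Int.card_Ico, Int.card_Ico]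
    omega
  have hsumProd : ∀ x ∈ J, Real.exp (-(g₁ x + g₂ x + e * (k + 1 : ℕ) + C₂)) ≤
      chordProd α J x (2 * θ + (x + k - 1) * α) := fun x hx => by
    have harg (i : ℤ) : 2 * θ + (x + k - 1) * α + i * α = 2 * θ + (x + i + k - 1 : ℤ) * α := by
      push_cast
      ring
    rw [← hN]
    refine hlower a₁ a₂ N₁ N₂ hdisj x _ _ _ (hg₁ x) (hg₂ x) ?_ ?_ <;> simp only [harg]
    exacts [hsum₁ x hx, hsum₂ x hx]
  have hdiffProd : ∀ x ∈ J, Real.exp (-(g₀ + g₀ + e * (k + 1 : ℕ) + C₂)) ≤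
      chordProd α J x (-x * α) := fun x hx => by
    have harg (i : ℤ) : -x * α + i * α = (i - x : ℤ) * α := by
      push_cast
      ring
    rw [← hN]
    refine hlower a₁ a₂ N₁ N₂ hdisj x _ _ _ hg₀ hg₀ ?_ ?_ <;> simp only [harg]
    exacts [fun i hi => hdiff x hx i (Finset.mem_union_left _ hi),
      fun i hi => hdiff x hx i (Finset.mem_union_right _ hi)]
  obtain ⟨x, hx, hlarge⟩ := exists_dirichletDetSup_mul_exp_le hcard he₀ hsumProd hdiffProd
    (hN ▸ hupper a₁ a₂ N₁ N₂ hdisj)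
  refine ⟨x, hx, hlarge.trans_eq' ?_⟩
  rw [he]
  push_cast
  ring_nf

end Diophantine

/-! ### Large determinants force decay -/

lemma IsEigenfunction.abs_le_of_large_dirichletDet {lam α θ E L g : ℝ} {φ : ℤ → ℝ} {k : ℕ}
    {x z μ : ℤ} (h : IsEigenfunction (amoPot lam α θ) E φ) (hφ : ∀ n, |φ n| ≤ 1)
    (hlam : 0 < lam) (hE : |E| ≤ 2 + 2 * lam) (hL : 0 ≤ L) (hk : IsGrowthScale lam α E L k)
    (hlarge : dirichletDetSup lam α E k * Real.exp (-g) ≤ |dirichletDet lam α E k (θ + x * α)|)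
    (hxz : x ≤ z) (hzx : z < x + k) (hleft : μ ≤ z - x + 1) (hright : μ ≤ x + k - z) :
    |φ z| ≤ 2 * Real.exp (-L * μ + g) := by
  obtain ⟨p, rfl⟩ : ∃ p : ℕ, z = x + p := ⟨(z - x).toNat, by omega⟩
  obtain ⟨q, rfl⟩ : ∃ q : ℕ, k = p + 1 + q := ⟨k - (p + 1), by omega⟩
  set S := dirichletDetSup lam α E (p + 1 + q)
  have hS : 0 < S := dirichletDetSup_pos hlam hE _
  have hend (m : ℕ) (hm : m ≤ p + 1 + q) (hμ : μ ≤ (p + 1 + q : ℕ) - m) (t : ℝ) (i : ℤ) :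
      |dirichletDet lam α E m t * φ i| ≤ S * Real.exp (-L * μ) := by
    have hμ' : (μ : ℝ) ≤ (p + 1 + q : ℕ) - m := by exact_mod_cast hμ
    rw [abs_mul]
    calc |dirichletDet lam α E m t| * |φ i|
        ≤ dirichletDetSup lam α E m * 1 :=
          mul_le_mul (abs_dirichletDet_le_sup hlam.le hE m t) (hφ i) (abs_nonneg _)
            (dirichletDetSup_pos hlam hE m).le
      _ ≤ S * Real.exp (-L * ((p + 1 + q : ℕ) - m)) := by
          rw [mul_one]
          exact hk m hm
      _ ≤ S * Real.exp (-L * μ) :=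
          mul_le_mul_of_nonneg_left (Real.exp_le_exp.2 (by nlinarith)) hS.le
  have hmain : S * Real.exp (-g) * |φ (x + p)| ≤ S * (2 * Real.exp (-L * μ)) := by
    calc S * Real.exp (-g) * |φ (x + p)|
        ≤ |dirichletDet lam α E (p + 1 + q) (θ + x * α)| * |φ (x + p)| := by gcongr
      _ ≤ S * Real.exp (-L * μ) + S * Real.exp (-L * μ) := by
          rw [← abs_mul, h.dirichletDet_mul_eq]
          exact (abs_add_le _ _).trans (add_le_add
            (hend q (by omega) (by omega) _ _) (hend p (by omega) (by omega) _ _))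
      _ = S * (2 * Real.exp (-L * μ)) := by ring
  rw [mul_assoc] at hmain
  calc |φ (x + p)| = Real.exp (-g) * |φ (x + p)| * Real.exp g := by
        rw [mul_right_comm, ← Real.exp_add, neg_add_cancel, Real.exp_zero, one_mul]
    _ ≤ 2 * Real.exp (-L * μ) * Real.exp g := by
        refine mul_le_mul_of_nonneg_right ?_ (Real.exp_nonneg _)
        exact le_of_mul_le_mul_left hmain hS
    _ = 2 * Real.exp (-L * μ + g) := by rw [Real.exp_add, mul_assoc]

/-! ### A single resonance at each scale -/

/-- Up to `|j| ≤ K`, the only one of the small divisors `j * α` (`j ≠ 0`) and `2 * θ + j * α` that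
may be smaller than `exp (-s)` is the reflection resonance `2 * θ + n * α`. -/
structure SoleResonance (α θ s : ℝ) (K n : ℤ) : Prop where
  exp_le_frequency : ∀ j : ℤ, j ≠ 0 → |j| ≤ K → Real.exp (-s) ≤ distToInt (j * α)
  exp_le_phase : ∀ j : ℤ, j ≠ n → |j| ≤ K → Real.exp (-s) ≤ distToInt (2 * θ + j * α)

lemma IsDiophantine.exists_two_mul_exp_le_distToInt {α : ℝ} (hα : IsDiophantine α) (K : ℕ) {ε : ℝ}
    (hε : 0 < ε) :
    ∃ Y : ℕ, ∀ y : ℕ, Y ≤ y → ∀ j : ℤ, j ≠ 0 → |j| ≤ K * y →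
      2 * Real.exp (-(ε * y)) ≤ distToInt (j * α) := by
  obtain ⟨κ, τ, hκ, hτ, h⟩ := hα
  have hlim : Tendsto (fun y : ℕ => 2 * (K : ℝ) ^ κ * ((y : ℝ) ^ κ * Real.exp (-ε * y))) atTop
      (nhds 0) := by
    have hpow := (tendsto_rpow_mul_exp_neg_mul_atTop_nhds_zero κ ε hε).comp
      tendsto_natCast_atTop_atTop
    simpa only [mul_zero, Function.comp_apply] using hpow.const_mul (2 * (K : ℝ) ^ κ)
  obtain ⟨Y, hY⟩ := eventually_atTop.1 (hlim.eventually (gt_mem_nhds hτ))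
  refine ⟨Y, fun y hy j hj hjK => le_trans ?_ (h j hj)⟩
  have hjK' : |(j : ℝ)| ≤ K * y := by exact_mod_cast hjK
  rw [le_div_iff₀ (by positivity)]
  calc 2 * Real.exp (-(ε * y)) * |(j : ℝ)| ^ κ
      ≤ 2 * Real.exp (-(ε * y)) * (K * y) ^ κ := by gcongr
    _ = 2 * (K : ℝ) ^ κ * ((y : ℝ) ^ κ * Real.exp (-ε * y)) := by
        rw [Real.mul_rpow (Nat.cast_nonneg _) (Nat.cast_nonneg _), neg_mul]
        ring
    _ ≤ τ := (hY y hy).le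

/-- Two resonances `2 * θ + n * α`, `2 * θ + m * α` would make `(n - m) * α` a small divisor. -/
lemma IsDiophantine.exists_soleResonance {α : ℝ} (hα : IsDiophantine α) (K : ℕ) {ε : ℝ}
    (hε : 0 < ε) :
    ∃ Y : ℕ, ∀ y : ℕ, Y ≤ y → ∀ θ : ℝ, ∃ n : ℤ, SoleResonance α θ (ε * y) (K * y) n := by
  obtain ⟨Y, hY⟩ := hα.exists_two_mul_exp_le_distToInt (2 * K) hε
  refine ⟨Y, fun y hy θ => ?_⟩
  have hfreq (j : ℤ) (hj : j ≠ 0) (hjK : |j| ≤ K * y) :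
      Real.exp (-(ε * y)) ≤ distToInt (j * α) := by
    have hdiv := hY y hy j hj (by push_cast; nlinarith [abs_nonneg j])
    linarith [Real.exp_pos (-(ε * y))]
  by_cases hres : ∃ n : ℤ, |n| ≤ K * y ∧ distToInt (2 * θ + n * α) < Real.exp (-(ε * y))
  · obtain ⟨n, hn, hsmall⟩ := hres
    refine ⟨n, hfreq, fun j hjn hj => ?_⟩
    have hdiv := hY y hy (j - n) (sub_ne_zero.2 hjn) (by
      push_cast
      linarith [abs_sub j n])
    have htri := distToInt_sub_le (2 * θ + j * α) (2 * θ + n * α)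
    rw [show 2 * θ + j * α - (2 * θ + n * α) = (j - n : ℤ) * α by push_cast; ring] at htri
    linarith
  · push Not at hres
    exact ⟨0, hfreq, fun j _ hj => hres j hj⟩

namespace SoleResonance

lemma exists_large_dirichletDet_of_near {α : ℝ} (hα : IsDiophantine α) {ε : ℝ} (hε : 0 < ε) :
    ∃ C : ℝ, ∀ (lam E θ s r : ℝ) (k : ℕ) (a n K : ℤ), SoleResonance α θ s K n → 0 ≤ s → s ≤ r →
      Real.exp (-r) ≤ distToInt (2 * θ + n * α) → 1 ≤ a → a ≤ k → 3 * k ≤ K →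
      ∃ x : ℤ, a - k ≤ x ∧ x ≤ a ∧
        (x ≤ n + 1 - a ∧ dirichletDetSup lam α E k * Real.exp (-(r + 2 * s + ε * k + C)) ≤
            |dirichletDet lam α E k (θ + x * α)| ∨
          n + 1 - a < x ∧ dirichletDetSup lam α E k * Real.exp (-(3 * s + ε * k + C)) ≤
            |dirichletDet lam α E k (θ + x * α)|) := by
  obtain ⟨C, hC⟩ := exists_large_dirichletDet hα hε
  refine ⟨C, fun lam E θ s r k a n K hsole hs hsr hn ha hak hK => ?_⟩
  have hmem (x : ℤ) : x ∈ block (a - k) (k + 1) ∪ block 0 0 ↔ a - k ≤ x ∧ x ≤ a := by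
    simp only [block, Finset.mem_union, Finset.mem_Ico]
    omega
  obtain ⟨x, hx, hlarge⟩ := hC lam E θ k (a - k) 0 (k + 1) 0
    (fun x => if x ≤ n + 1 - a then r else s) (fun _ => 0) s rfl (by simp) hs
    (fun x => by split_ifs <;> linarith) (fun _ => le_rfl)
    (fun x hx i hi hix => by
      rw [hmem] at hx hi
      exact hsole.exp_le_frequency _ (sub_ne_zero.2 hix) (abs_le.2 (by omega)))
    (fun x hx i hi _ => by
      have hi := (hmem i).1 (Finset.mem_union_left _ hi)
      rw [hmem] at hx
      have hK : |x + i + k - 1| ≤ K := abs_le.2 (by omega)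
      rcases eq_or_ne (x + i + k - 1) n with hxi | hxi
      · rw [if_pos (by omega), hxi]
        exact hn
      · refine le_trans (Real.exp_le_exp.2 ?_) (hsole.exp_le_phase _ hxi hK)
        split_ifs <;> linarith)
    (by simp)
  rw [hmem] at hx
  refine ⟨x, hx.1, hx.2, ?_⟩
  rcases le_or_gt x (n + 1 - a) with hxn | hxn
  · rw [if_pos hxn] at hlarge
    exact .inl ⟨hxn, by simpa only [add_zero] using hlarge⟩
  · rw [if_neg hxn.not_ge, add_zero, show s + 2 * s = 3 * s by ring] at hlarge
    exact .inr ⟨hxn, hlarge⟩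

lemma exists_large_dirichletDet_of_avoid {α : ℝ} (hα : IsDiophantine α) {ε : ℝ} (hε : 0 < ε) :
    ∃ C : ℝ, ∀ (lam E θ s : ℝ) (k : ℕ) (n K M a₁ a₂ : ℤ) (N₁ N₂ : ℕ), SoleResonance α θ s K n →
      0 ≤ s → N₁ + N₂ = k + 1 → Disjoint (block a₁ N₁) (block a₂ N₂) →
      (∀ x ∈ block a₁ N₁ ∪ block a₂ N₂, |x| ≤ M) → 2 * M + k + 1 ≤ K →
      (∀ x ∈ block a₁ N₁ ∪ block a₂ N₂, ∀ i ∈ block a₁ N₁ ∪ block a₂ N₂, x + i + k - 1 ≠ n) →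
      ∃ x ∈ block a₁ N₁ ∪ block a₂ N₂,
        dirichletDetSup lam α E k * Real.exp (-(4 * s + ε * k + C)) ≤
          |dirichletDet lam α E k (θ + x * α)| := by
  obtain ⟨C, hC⟩ := exists_large_dirichletDet hα hε
  refine ⟨C, fun lam E θ s k n K M a₁ a₂ N₁ N₂ hsole hs hN hdisj hM hK havoid => ?_⟩
  have hphase (x : ℤ) (hx : x ∈ block a₁ N₁ ∪ block a₂ N₂) (i : ℤ)
      (hi : i ∈ block a₁ N₁ ∪ block a₂ N₂) :
      Real.exp (-s) ≤ distToInt (2 * θ + (x + i + k - 1 : ℤ) * α) := by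
    have hxM := abs_le.1 (hM x hx)
    have hiM := abs_le.1 (hM i hi)
    exact hsole.exp_le_phase _ (havoid x hx i hi) (abs_le.2 (by omega))
  obtain ⟨x, hx, hlarge⟩ := hC lam E θ k a₁ a₂ N₁ N₂ (fun _ => s) (fun _ => s) s hN hdisj hs
    (fun _ => hs) (fun _ => hs)
    (fun x hx i hi hix => by
      have hxM := abs_le.1 (hM x hx)
      have hiM := abs_le.1 (hM i hi)
      exact hsole.exp_le_frequency _ (sub_ne_zero.2 hix) (abs_le.2 (by omega)))
    (fun x hx i hi _ => hphase x hx i (Finset.mem_union_left _ hi))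
    (fun x hx i hi _ => hphase x hx i (Finset.mem_union_right _ hi))
  refine ⟨x, hx, ?_⟩
  rwa [show s + s + 2 * s = 4 * s by ring] at hlarge

end SoleResonance

/-- Every point of the two blocks is the left end of an interval of length `k` containing `0` or `y`
at depth at least `w`. Whether `0` or `y` is served by the long block, and on which side the short
block lies, depends on the position of the resonance `n` that the sums have to avoid. -/
lemma exists_avoiding_blocks {k w : ℕ} {n y : ℤ} (hw : 1 ≤ w) (hwk : 8 * w ≤ k) (hky : k < y)
    (hny : k < |n - y|) :
    ∃ (a₁ a₂ : ℤ) (N₁ N₂ : ℕ), N₁ + N₂ = k + 1 ∧ Disjoint (block a₁ N₁) (block a₂ N₂) ∧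
      (∀ x ∈ block a₁ N₁ ∪ block a₂ N₂, |x| ≤ 2 * y) ∧
      (∀ x ∈ block a₁ N₁ ∪ block a₂ N₂, ∀ i ∈ block a₁ N₁ ∪ block a₂ N₂, x + i + k - 1 ≠ n) ∧
      ∀ x ∈ block a₁ N₁ ∪ block a₂ N₂,
        (x + w ≤ 0 ∧ w ≤ x + k) ∨ (x + w ≤ y ∧ y + w ≤ x + k) := by
  simp only [Finset.disjoint_left, Finset.mem_union, Finset.mem_Ico, abs_le]
  rcases le_or_gt n y with hn | hn
  · rw [abs_of_nonpos (by omega)] at hny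
    obtain ⟨b, hb⟩ : ∃ b : ℤ, (n ≤ 0 ∧ b = -3 * w) ∨ (0 < n ∧ b = w + 1 - k) := by
      rcases le_or_gt n 0 with hn₀ | hn₀
      exacts [⟨_, .inl ⟨hn₀, rfl⟩⟩, ⟨_, .inr ⟨hn₀, rfl⟩⟩]
    exact ⟨y - k + w + 1, b, k - 2 * w, 2 * w + 1, by omega, by omega, by omega, by omega,
      by omega⟩
  · rw [abs_of_pos (by omega)] at hny
    obtain ⟨b, hb⟩ : ∃ b : ℤ, (n ≤ 2 * y ∧ b = y - 3 * w) ∨ (2 * y < n ∧ b = y + w + 1 - k) := by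
      rcases le_or_gt n (2 * y) with hn₀ | hn₀
      exacts [⟨_, .inl ⟨hn₀, rfl⟩⟩, ⟨_, .inr ⟨hn₀, rfl⟩⟩]
    exact ⟨-k + w + 1, b, k - 2 * w, 2 * w + 1, by omega, by omega, by omega, by omega, by omega⟩

/-! ### Eigenfunctions cannot be large at two distant sites -/

section Localization

variable {lam α θ E L : ℝ} {φ : ℤ → ℝ} {k : ℕ}

lemma IsEigenfunction.min_abs_le_of_near (h : IsEigenfunction (amoPot lam α θ) E φ)
    (hφ : ∀ n, |φ n| ≤ 1) (hlam : 0 < lam) (hE : |E| ≤ 2 + 2 * lam) (hL : 0 ≤ L)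
    (hk : IsGrowthScale lam α E L k) {a n y x : ℤ} {g₁ g₂ : ℝ} (ha : 1 ≤ a) (hay : a ≤ y)
    (hyk : 3 * y ≤ k) (hn : 0 ≤ n) (hax : a - k ≤ x) (hxa : x ≤ a)
    (hlarge : x ≤ n + 1 - a ∧ dirichletDetSup lam α E k * Real.exp (-g₁) ≤
        |dirichletDet lam α E k (θ + x * α)| ∨
      n + 1 - a < x ∧ dirichletDetSup lam α E k * Real.exp (-g₂) ≤
        |dirichletDet lam α E k (θ + x * α)|) :
    min |φ 0| |φ y| ≤ 2 * Real.exp (-L * (a - |n - y| : ℤ) + g₁) ∨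
      min |φ 0| |φ y| ≤ 2 * Real.exp (-L * (y - a : ℤ) + g₂) := by
  have hleft := neg_abs_le (n - y)
  have hright := le_abs_self (n - y)
  rcases hlarge with ⟨hxn, hlarge⟩ | ⟨hxn, hlarge⟩
  · left
    rcases le_or_gt x (-y) with hxy | hxy
    · exact (min_le_left _ _).trans (h.abs_le_of_large_dirichletDet hφ hlam hE hL hk hlarge
        (by omega) (by omega) (by omega) (by omega))
    · exact (min_le_right _ _).trans (h.abs_le_of_large_dirichletDet hφ hlam hE hL hk hlarge
        (by omega) (by omega) (by omega) (by omega))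
  · exact .inr ((min_le_right _ _).trans (h.abs_le_of_large_dirichletDet hφ hlam hE hL hk hlarge
      (by omega) (by omega) (by omega) (by omega)))

lemma IsEigenfunction.min_abs_le_of_far (h : IsEigenfunction (amoPot lam α θ) E φ)
    (hφ : ∀ n, |φ n| ≤ 1) (hlam : 0 < lam) (hE : |E| ≤ 2 + 2 * lam) (hL : 0 ≤ L)
    (hk : IsGrowthScale lam α E L k) {w : ℕ} {x y : ℤ} {g : ℝ} (hw : 1 ≤ w)
    (hx : (x + w ≤ 0 ∧ w ≤ x + k) ∨ (x + w ≤ y ∧ y + w ≤ x + k))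
    (hlarge : dirichletDetSup lam α E k * Real.exp (-g) ≤ |dirichletDet lam α E k (θ + x * α)|) :
    min |φ 0| |φ y| ≤ 2 * Real.exp (-L * w + g) := by
  rw [← Int.cast_natCast w]
  rcases hx with hx | hx
  · exact (min_le_left _ _).trans (h.abs_le_of_large_dirichletDet hφ hlam hE hL hk hlarge
      (by omega) (by omega) (by omega) (by omega))
  · exact (min_le_right _ _).trans (h.abs_le_of_large_dirichletDet hφ hlam hE hL hk hlarge
      (by omega) (by omega) (by omega) (by omega))

lemma IsEigenfunction.min_abs_le_exp_of_near (h : IsEigenfunction (amoPot lam α θ) E φ)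
    (hφ : ∀ n, |φ n| ≤ 1) (hlam : 0 < lam) (hE : |E| ≤ 2 + 2 * lam) (hL : 0 < L)
    (hk : IsGrowthScale lam α E L k) {c δ ρ C : ℝ} {y : ℕ} {n : ℤ} (hc₀ : 0 < c) (hc : c ≤ 1 / 8)
    (hδ₀ : 0 ≤ δ) (hδ : δ = L * (1 - 8 * c)) (hρ : 64 * ρ ≤ L * c) (hy : 2 ≤ y)
    (hyk : 3 * y ≤ k) (hny : |(n : ℝ) - y| ≤ c * y)
    (hdet : ∀ a : ℤ, 1 ≤ a → a ≤ k → ∃ x, a - k ≤ x ∧ x ≤ a ∧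
      (x ≤ n + 1 - a ∧ dirichletDetSup lam α E k * Real.exp (-(δ * |(n : ℝ)| + ρ * y + C)) ≤
          |dirichletDet lam α E k (θ + x * α)| ∨
        n + 1 - a < x ∧ dirichletDetSup lam α E k * Real.exp (-(ρ * y + C)) ≤
          |dirichletDet lam α E k (θ + x * α)|)) :
    min |φ 0| |φ y| ≤ 2 * Real.exp (L + C - 4 * ρ * y) := by
  have hyR : (2 : ℝ) ≤ y := by exact_mod_cast hy
  have hcy : c * y ≤ 1 / 8 * y := by gcongr
  have hnR := abs_le.1 hny
  have hn : 0 ≤ n := by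
    have : (0 : ℝ) ≤ n := by linarith
    exact_mod_cast this
  set a : ℤ := ⌊(1 - c) * (y : ℝ)⌋
  have ha_le : (a : ℝ) ≤ (1 - c) * y := Int.floor_le _
  have ha_lt : (1 - c) * y < a + 1 := Int.lt_floor_add_one _
  have ha : 1 ≤ a := Int.le_floor.2 (by push_cast; linarith)
  have hay : a ≤ y := by
    have : (a : ℝ) ≤ y := by nlinarith
    exact_mod_cast this
  obtain ⟨x, hax, hxa, hlarge⟩ := hdet a ha (by omega)
  have hρy : 64 * (ρ * y) ≤ L * (c * y) := by nlinarith
  have hLcy : 0 < L * (c * y) := by positivity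
  rcases h.min_abs_le_of_near hφ hlam hE hL.le hk ha hay (by omega) hn hax hxa hlarge with
    hmin | hmin
  · refine hmin.trans (mul_le_mul_of_nonneg_left (Real.exp_le_exp.2 ?_) zero_le_two)
    have hdepth : (1 - 2 * c) * y - 1 ≤ ((a - |n - y| : ℤ) : ℝ) := by
      push_cast
      linarith
    have hn_le : δ * |(n : ℝ)| ≤ δ * ((1 + c) * y) := by
      rw [abs_of_nonneg (Int.cast_nonneg hn)]
      exact mul_le_mul_of_nonneg_left (by linarith) hδ₀
    have hLdepth := mul_le_mul_of_nonneg_left hdepth hL.le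
    have hsq : 0 ≤ L * c * c * y := by positivity
    rw [hδ] at hn_le ⊢
    linarith
  · refine hmin.trans (mul_le_mul_of_nonneg_left (Real.exp_le_exp.2 ?_) zero_le_two)
    have hdepth : c * y ≤ ((y - a : ℤ) : ℝ) := by
      push_cast
      linarith
    have hLdepth := mul_le_mul_of_nonneg_left hdepth hL.le
    linarith

lemma IsEigenfunction.min_abs_le_exp_of_far (h : IsEigenfunction (amoPot lam α θ) E φ)
    (hφ : ∀ n, |φ n| ≤ 1) (hlam : 0 < lam) (hE : |E| ≤ 2 + 2 * lam) (hL : 0 ≤ L)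
    (hk : IsGrowthScale lam α E L k) {ρ C : ℝ} {y : ℕ} {n : ℤ} (hk₈ : 8 ≤ k) (hky : k < y)
    (hkn : k < |n - y|) (hρ : 2 * ρ * y ≤ L * ((k : ℝ) / 8 + 1))
    (hdet : ∀ (a₁ a₂ : ℤ) (N₁ N₂ : ℕ), N₁ + N₂ = k + 1 → Disjoint (block a₁ N₁) (block a₂ N₂) →
      (∀ x ∈ block a₁ N₁ ∪ block a₂ N₂, |x| ≤ 2 * y) →
      (∀ x ∈ block a₁ N₁ ∪ block a₂ N₂, ∀ i ∈ block a₁ N₁ ∪ block a₂ N₂, x + i + k - 1 ≠ n) →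
      ∃ x ∈ block a₁ N₁ ∪ block a₂ N₂, dirichletDetSup lam α E k * Real.exp (-(ρ * y + C)) ≤
        |dirichletDet lam α E k (θ + x * α)|) :
    min |φ 0| |φ y| ≤ 2 * Real.exp (2 * L + C - ρ * y) := by
  obtain ⟨a₁, a₂, N₁, N₂, hN, hdisj, hbound, havoid, hdeep⟩ :=
    exists_avoiding_blocks (w := k / 8) (y := y) (by omega) (by omega) (by omega) hkn
  obtain ⟨x, hx, hlarge⟩ := hdet a₁ a₂ N₁ N₂ hN hdisj hbound havoid
  refine (h.min_abs_le_of_far hφ hlam hE hL hk (by omega) (hdeep x hx) hlarge).trans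
    (mul_le_mul_of_nonneg_left (Real.exp_le_exp.2 ?_) zero_le_two)
  have hw : (k : ℝ) / 8 + 1 ≤ (k / 8 : ℕ) + 2 := by
    have : (k : ℝ) ≤ 8 * (k / 8 : ℕ) + 8 := by exact_mod_cast (by omega : k ≤ 8 * (k / 8) + 8)
    linarith
  have hLw := mul_le_mul_of_nonneg_left hw hL
  linarith

end Localization

lemma exists_rate_of_lt {δ ℓ : ℝ} (hδ₀ : 0 < δ) (hδ : δ < ℓ) :
    ∃ L c : ℝ, 0 < L ∧ L < ℓ ∧ 0 < c ∧ c ≤ 1 / 8 ∧ δ = L * (1 - 8 * c) := by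
  have hL : 0 < (δ + ℓ) / 2 := by linarith
  have hlt : δ / ((δ + ℓ) / 2) < 1 := (div_lt_one hL).2 (by linarith)
  have hpos : 0 < δ / ((δ + ℓ) / 2) := by positivity
  refine ⟨(δ + ℓ) / 2, (1 - δ / ((δ + ℓ) / 2)) / 8, hL, by linarith, by linarith, by linarith, ?_⟩
  have hne : δ + ℓ ≠ 0 := by linarith
  field_simp
  ring

lemma exists_min_abs_le_exp_of_near {lam α L c δ ρ : ℝ} (hlam : 0 < lam) (hα : IsDiophantine α)
    (hL : 0 < L) (hc₀ : 0 < c) (hc : c ≤ 1 / 8) (hδ₀ : 0 ≤ δ) (hδ : δ = L * (1 - 8 * c))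
    (hρ₀ : 0 < ρ) (hρ : 64 * ρ ≤ L * c) {R : ℕ} (hR : 1 ≤ R) :
    ∃ C : ℝ, ∀ (θ E : ℝ) (φ : ℤ → ℝ) (y k : ℕ) (n : ℤ), |E| ≤ 2 + 2 * lam →
      IsEigenfunction (amoPot lam α θ) E φ → (∀ m, |φ m| ≤ 1) →
      SoleResonance α θ (ρ / 10 * y) ((9 * R : ℕ) * y) n → IsGrowthScale lam α E L k →
      3 * y ≤ k → k ≤ R * (3 * y) → 2 ≤ y →
      Real.exp (-(δ * |(n : ℝ)|)) ≤ distToInt (2 * θ + n * α) → |(n : ℝ) - y| ≤ c * y →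
      min |φ 0| |φ y| ≤ 2 * Real.exp (L + C - 4 * ρ * y) := by
  have hε : 0 < ρ / 10 / (3 * R) := by positivity
  obtain ⟨C, hC⟩ := SoleResonance.exists_large_dirichletDet_of_near hα hε
  refine ⟨C, fun θ E φ y k n hE h hφ hsole hk hyk hkR hy hn hny =>
    h.min_abs_le_exp_of_near hφ hlam hE hL hk hc₀ hc hδ₀ hδ hρ hy hyk hny fun a ha hak => ?_⟩
  have hεk : ρ / 10 / (3 * R) * k ≤ ρ / 10 * y := by
    have hkR' : (k : ℝ) ≤ 3 * R * y := by exact_mod_cast hkR.trans_eq (by ring)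
    calc ρ / 10 / (3 * R) * k ≤ ρ / 10 / (3 * R) * (3 * R * y) := by gcongr
      _ = ρ / 10 * y := by field_simp
  have hρy : 0 < ρ * y := by positivity
  obtain ⟨x, hax, hxa, hlarge⟩ := hC lam E θ (ρ / 10 * y) (δ * |(n : ℝ)| + ρ / 10 * y) k a n
    ((9 * R : ℕ) * y) hsole (by positivity) (le_add_of_nonneg_left (by positivity))
    ((Real.exp_le_exp.2 (by linarith)).trans hn) ha hak
    (by exact_mod_cast (by linarith : 3 * k ≤ 9 * R * y))
  refine ⟨x, hax, hxa, hlarge.imp (fun hx => ⟨hx.1, le_trans ?_ hx.2⟩)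
    fun hx => ⟨hx.1, le_trans ?_ hx.2⟩⟩ <;>
  · refine mul_le_mul_of_nonneg_left (Real.exp_le_exp.2 ?_) (dirichletDetSup_pos hlam hE k).le
    linarith

lemma exists_min_abs_le_exp_of_far {lam α L c ρ : ℝ} (hlam : 0 < lam) (hα : IsDiophantine α)
    (hL : 0 ≤ L) (hc₀ : 0 < c) (hc : c ≤ 1 / 8) {R : ℕ} (hR : 1 ≤ R) (hρ₀ : 0 < ρ)
    (hρ : 64 * R * ρ ≤ L * c) :
    ∃ C : ℝ, ∀ (θ E : ℝ) (φ : ℤ → ℝ) (y k q : ℕ) (n : ℤ), |E| ≤ 2 + 2 * lam →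
      IsEigenfunction (amoPot lam α θ) E φ → (∀ m, |φ m| ≤ 1) →
      SoleResonance α θ (ρ / 10 * y) ((9 * R : ℕ) * y) n → IsGrowthScale lam α E L k →
      8 ≤ q → q ≤ c * y / (4 * R) → c * y / (4 * R) < q + 1 → q ≤ k → k ≤ R * q →
      c * y < |(n : ℝ) - y| →
      min |φ 0| |φ y| ≤ 2 * Real.exp (2 * L + C - ρ * y) := by
  have hε : 0 < ρ / 10 / (3 * R) := by positivity
  obtain ⟨C, hC⟩ := SoleResonance.exists_large_dirichletDet_of_avoid hα hε
  refine ⟨C, fun θ E φ y k q n hE h hφ hsole hk hq hqy hyq hqk hkq hny => ?_⟩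
  have hkR : (k : ℝ) ≤ R * q := by exact_mod_cast hkq
  have hqk' : (q : ℝ) ≤ k := by exact_mod_cast hqk
  have hq' : (8 : ℝ) ≤ q := by exact_mod_cast hq
  rw [le_div_iff₀ (by positivity)] at hqy
  rw [div_lt_iff₀ (by positivity)] at hyq
  have hkcy : (4 : ℝ) * k ≤ c * y := by linarith
  have hcy : c * y ≤ 1 / 8 * y := by gcongr
  have hky : k < y := by exact_mod_cast (by linarith [hkcy] : (k : ℝ) < y)
  have hkn : (k : ℤ) < |n - y| := by exact_mod_cast (by linarith [hkcy] : (k : ℝ) < |(n : ℝ) - y|)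
  have hεk : ρ / 10 / (3 * R) * k ≤ ρ / 10 * y := by
    rw [div_mul_eq_mul_div, div_le_iff₀ (by positivity), mul_assoc]
    gcongr
    nlinarith [(Nat.one_le_cast (α := ℝ)).2 hR]
  have hρy : 0 < ρ * y := by
    have : (0 : ℝ) < y := by linarith
    positivity
  refine h.min_abs_le_exp_of_far hφ hlam hE hL hk (by omega) hky hkn ?_
    fun a₁ a₂ N₁ N₂ hN hdisj hbound havoid => ?_
  · refine le_of_mul_le_mul_left ?_ (by positivity : (0 : ℝ) < 32 * R)
    calc 32 * R * (2 * ρ * y) = 64 * R * ρ * y := by ring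
      _ ≤ L * (c * y) := by
          rw [← mul_assoc]
          gcongr
      _ ≤ L * ((k + 8) * (4 * R)) := by
          refine mul_le_mul_of_nonneg_left (hyq.le.trans ?_) hL
          gcongr
          norm_num
      _ = 32 * R * (L * ((k : ℝ) / 8 + 1)) := by ring
  · obtain ⟨x, hx, hlarge⟩ := hC lam E θ (ρ / 10 * y) k n ((9 * R : ℕ) * y) (2 * y) a₁ a₂ N₁ N₂
      hsole (by positivity) hN hdisj hbound (by
        have : y ≤ R * y := Nat.le_mul_of_pos_left y hR
        exact_mod_cast (by linarith : 2 * (2 * y) + k + 1 ≤ 9 * R * y)) havoid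
    refine ⟨x, hx, le_trans (mul_le_mul_of_nonneg_left (Real.exp_le_exp.2 ?_)
      (dirichletDetSup_pos hlam hE k).le) hlarge⟩
    linarith

lemma exists_forall_le_abs_of_eventually_cofinite {p : ℤ → Prop} (h : ∀ᶠ n in cofinite, p n) :
    ∃ N : ℕ, ∀ n : ℤ, N ≤ |n| → p n := by
  rw [Int.cofinite_eq, eventually_sup, eventually_atBot, eventually_atTop] at h
  obtain ⟨⟨a, ha⟩, b, hb⟩ := h
  refine ⟨a.natAbs + b.natAbs, fun n hn => ?_⟩
  rcases le_abs.1 hn with hn | hn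
  · exact hb n (by omega)
  · exact ha n (by omega)

lemma exists_forall_min_abs_le_exp {lam α θ δ : ℝ} (hlam : 0 < lam) (hα : IsDiophantine α)
    (hδ₀ : 0 < δ) (hδ : δ < Real.log lam)
    (hphase : ∀ᶠ n : ℤ in cofinite, Real.exp (-(δ * |(n : ℝ)|)) ≤ distToInt (2 * θ + n * α)) :
    ∃ (A ρ : ℝ) (Y : ℕ), 0 < A ∧ 0 < ρ ∧ ∀ (E : ℝ) (φ : ℤ → ℝ), |E| ≤ 2 + 2 * lam →
      IsEigenfunction (amoPot lam α θ) E φ → (∀ n, |φ n| ≤ 1) →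
      ∀ y : ℕ, Y ≤ y → min |φ 0| |φ y| ≤ A * Real.exp (-(ρ * y)) := by
  obtain ⟨N, hN⟩ := exists_forall_le_abs_of_eventually_cofinite hphase
  obtain ⟨L, c, hL, hLlam, hc₀, hc, hδc⟩ := exists_rate_of_lt hδ₀ hδ
  obtain ⟨R, hR, hscale⟩ := exists_isGrowthScale hlam hLlam α
  have hR₁ : (1 : ℝ) ≤ R := by exact_mod_cast hR
  obtain ⟨ρ, hρ₀, hρ⟩ : ∃ ρ, 0 < ρ ∧ 64 * R * ρ = L * c :=
    ⟨L * c / (64 * R), by positivity, by field_simp⟩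
  have hρ64 : 64 * ρ ≤ L * c := by nlinarith
  obtain ⟨C₁, hnear⟩ := exists_min_abs_le_exp_of_near hlam hα hL hc₀ hc hδ₀.le hδc hρ₀ hρ64 hR
  obtain ⟨C₂, hfar⟩ := exists_min_abs_le_exp_of_far hlam hα hL.le hc₀ hc hR hρ₀ hρ.le
  obtain ⟨Y, hY⟩ := hα.exists_soleResonance (9 * R) (by positivity : 0 < ρ / 10)
  obtain ⟨Y', hY'⟩ := exists_nat_ge (8 * (4 * R) / c)
  refine ⟨2 * Real.exp (2 * L + max C₁ C₂), ρ, Y + Y' + 2 * N + 2, by positivity, hρ₀,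
    fun E φ hE h hφ y hy => ?_⟩
  obtain ⟨n, hsole⟩ := hY y (by omega) θ
  have hρy : 0 ≤ ρ * y := by positivity
  suffices hmin : min |φ 0| |φ y| ≤ 2 * Real.exp (2 * L + max C₁ C₂ - ρ * y) by
    rwa [mul_assoc, ← Real.exp_add, ← sub_eq_add_neg]
  rcases le_or_gt |(n : ℝ) - y| (c * y) with hny | hny
  · obtain ⟨k, hyk, hkR, hk⟩ := hscale E hE (3 * y)
    have hNn : (N : ℤ) ≤ |n| := by
      have hNy : (2 : ℝ) * N ≤ y := by exact_mod_cast (by omega : 2 * N ≤ y)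
      have hcy : c * y ≤ 1 / 8 * y := by gcongr
      exact_mod_cast (by linarith [abs_le.1 hny, le_abs_self (n : ℝ)] : (N : ℝ) ≤ |(n : ℝ)|)
    refine (hnear θ E φ y k n hE h hφ hsole hk hyk hkR (by omega) (hN n hNn) hny).trans
      (mul_le_mul_of_nonneg_left (Real.exp_le_exp.2 ?_) zero_le_two)
    linarith [le_max_left C₁ C₂]
  · have hq : 8 ≤ ⌊c * y / (4 * R)⌋₊ := Nat.le_floor (by
      have hyY : (Y' : ℝ) ≤ y := by exact_mod_cast (by omega : Y' ≤ y)
      rw [le_div_iff₀ (by positivity), mul_comm c]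
      exact (div_le_iff₀ hc₀).1 (hY'.trans hyY))
    obtain ⟨k, hqk, hkR, hk⟩ := hscale E hE ⌊c * y / (4 * R)⌋₊
    refine (hfar θ E φ y k _ n hE h hφ hsole hk hq (Nat.floor_le (by positivity))
      (Nat.lt_floor_add_one _) hqk hkR hny).trans
      (mul_le_mul_of_nonneg_left (Real.exp_le_exp.2 ?_) zero_le_two)
    linarith [le_max_right C₁ C₂]

/-! ### Products of eigenfunction values -/

lemma IsEigenfunction.translate {lam α θ E : ℝ} {φ : ℤ → ℝ}
    (h : IsEigenfunction (amoPot lam α θ) E φ) (j : ℤ) :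
    IsEigenfunction (amoPot lam α (θ + j * α)) E fun k => φ (j + k) := by
  intro k
  have hpot : amoPot lam α (θ + j * α) k = amoPot lam α θ (j + k) := by
    rw [amoPot, amoPot, show θ + j * α + k * α = θ + (j + k : ℤ) * α by push_cast; ring]
  have hk := h (j + k)
  rwa [add_assoc j, add_sub_assoc, ← hpot] at hk

lemma IsEigenfunction.reflect {lam α θ E : ℝ} {φ : ℤ → ℝ}
    (h : IsEigenfunction (amoPot lam α θ) E φ) :
    IsEigenfunction (amoPot lam α (-θ)) E fun k => φ (-k) := by
  intro k
  have hpot : amoPot lam α (-θ) k = amoPot lam α θ (-k) := by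
    rw [amoPot, amoPot, ← Real.cos_neg,
      show -(2 * π * (-θ + k * α)) = 2 * π * (θ + (-k : ℤ) * α) by push_cast; ring]
  have hk := h (-k)
  rwa [add_comm (φ _), sub_eq_add_neg, ← neg_add, neg_add_eq_sub, ← neg_sub, ← hpot] at hk

lemma mul_exp_neg_mul_le {A A' c c' x : ℝ} (hA : A ≤ A') (hA' : 0 ≤ A') (hc : c' ≤ c)
    (hx : 0 ≤ x) : A * Real.exp (-(c * x)) ≤ A' * Real.exp (-(c' * x)) :=
  mul_le_mul hA (Real.exp_le_exp.2 (neg_le_neg (mul_le_mul_of_nonneg_right hc hx)))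
    (Real.exp_nonneg _) hA'

lemma exists_abs_mul_natCast_le_exp {lam α θ δ : ℝ} (hlam : 0 < lam) (hα : IsDiophantine α)
    (hδ₀ : 0 < δ) (hδ : δ < Real.log lam)
    (hphase : ∀ᶠ n : ℤ in cofinite, Real.exp (-(δ * |(n : ℝ)|)) ≤ distToInt (2 * θ + n * α)) :
    ∃ A c : ℝ, 0 < A ∧ 0 < c ∧ ∀ (E : ℝ) (φ : ℤ → ℝ), |E| ≤ 2 + 2 * lam →
      IsEigenfunction (amoPot lam α θ) E φ → (∀ n, |φ n| ≤ 1) →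
      ∀ y : ℕ, |φ 0 * φ y| ≤ A * Real.exp (-(c * y)) := by
  obtain ⟨A, c, Y, hA, hc, H⟩ := exists_forall_min_abs_le_exp hlam hα hδ₀ hδ hphase
  refine ⟨A + Real.exp (c * Y), c, by positivity, hc, fun E φ hE h hφ y => ?_⟩
  rw [abs_mul, add_mul, ← Real.exp_add]
  rcases le_or_gt Y y with hy | hy
  · have hmin : |φ 0| * |φ y| ≤ min |φ 0| |φ y| :=
      le_min (mul_le_of_le_one_right (abs_nonneg _) (hφ _))
        (mul_le_of_le_one_left (abs_nonneg _) (hφ _))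
    exact le_add_of_le_of_nonneg (hmin.trans (H E φ hE h hφ y hy)) (Real.exp_nonneg _)
  · refine le_add_of_nonneg_of_le (by positivity)
      ((mul_le_one₀ (hφ _) (abs_nonneg _) (hφ _)).trans (Real.one_le_exp ?_))
    have hyY : c * y ≤ c * Y := by gcongr
    linarith

lemma exists_abs_zero_mul_le_exp {lam α θ δ : ℝ} (hlam : 0 < lam) (hα : IsDiophantine α)
    (hδ₀ : 0 < δ) (hδ : δ < Real.log lam)
    (hphase : ∀ᶠ n : ℤ in cofinite, Real.exp (-(δ * |(n : ℝ)|)) ≤ distToInt (2 * θ + n * α)) :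
    ∃ A c : ℝ, 0 < A ∧ 0 < c ∧ ∀ (E : ℝ) (φ : ℤ → ℝ), |E| ≤ 2 + 2 * lam →
      IsEigenfunction (amoPot lam α θ) E φ → (∀ n, |φ n| ≤ 1) →
      ∀ ℓ : ℤ, |φ 0 * φ ℓ| ≤ A * Real.exp (-(c * |(ℓ : ℝ)|)) := by
  have hphase' : ∀ᶠ n : ℤ in cofinite,
      Real.exp (-(δ * |(n : ℝ)|)) ≤ distToInt (2 * -θ + n * α) := by
    filter_upwards [neg_injective.tendsto_cofinite.eventually hphase] with n hn
    rwa [Int.cast_neg, abs_neg, ← distToInt_neg,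
      show -(2 * θ + -(n : ℝ) * α) = 2 * -θ + n * α by ring] at hn
  obtain ⟨A₁, c₁, hA₁, hc₁, H₁⟩ := exists_abs_mul_natCast_le_exp hlam hα hδ₀ hδ hphase
  obtain ⟨A₂, c₂, -, hc₂, H₂⟩ := exists_abs_mul_natCast_le_exp hlam hα hδ₀ hδ hphase'
  have hA : 0 < max A₁ A₂ := lt_max_of_lt_left hA₁
  refine ⟨max A₁ A₂, min c₁ c₂, hA, lt_min hc₁ hc₂, fun E φ hE h hφ ℓ => ?_⟩
  rcases Int.eq_nat_or_neg ℓ with ⟨y, rfl | rfl⟩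
  · refine (H₁ E φ hE h hφ y).trans ?_
    rw [Int.cast_natCast, Nat.abs_cast]
    exact mul_exp_neg_mul_le (le_max_left _ _) hA.le (min_le_left _ _) y.cast_nonneg
  · have hy := H₂ E _ hE h.reflect (fun n => hφ _) y
    rw [neg_zero] at hy
    refine hy.trans ?_
    rw [Int.cast_neg, abs_neg, Int.cast_natCast, Nat.abs_cast]
    exact mul_exp_neg_mul_le (le_max_right _ _) hA.le (min_le_right _ _) y.cast_nonneg

lemma eventually_exp_le_distToInt_translate {α θ δ δ' : ℝ} (hδ₀ : 0 < δ) (hδ : δ < δ')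
    (hphase : ∀ᶠ n : ℤ in cofinite, Real.exp (-(δ * |(n : ℝ)|)) ≤ distToInt (2 * θ + n * α))
    (j : ℤ) :
    ∀ᶠ n : ℤ in cofinite,
      Real.exp (-(δ' * |(n : ℝ)|)) ≤ distToInt (2 * (θ + j * α) + n * α) := by
  have hshift := (add_left_injective (2 * j)).tendsto_cofinite.eventually hphase
  have hlarge := (tendsto_norm_cocompact_atTop.comp Int.tendsto_coe_cofinite).eventually_ge_atTop
    (δ * |2 * (j : ℝ)| / (δ' - δ))
  filter_upwards [hshift, hlarge] with n hn hnj
  rw [Function.comp_apply, Real.norm_eq_abs, div_le_iff₀ (sub_pos.2 hδ)] at hnj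
  rw [show 2 * (θ + j * α) + n * α = 2 * θ + (n + 2 * j : ℤ) * α by push_cast; ring]
  refine le_trans (Real.exp_le_exp.2 (neg_le_neg ?_)) hn
  push_cast
  calc δ * |(n : ℝ) + 2 * j| ≤ δ * (|(n : ℝ)| + |2 * (j : ℝ)|) := by gcongr; exact abs_add_le _ _
    _ ≤ δ' * |(n : ℝ)| := by linarith

lemma exists_abs_mul_le_exp {lam α θ δ : ℝ} (hlam : 0 < lam) (hα : IsDiophantine α)
    (hδ₀ : 0 < δ) (hδ : δ < Real.log lam)
    (hphase : ∀ᶠ n : ℤ in cofinite, Real.exp (-(δ * |(n : ℝ)|)) ≤ distToInt (2 * θ + n * α))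
    (j : ℤ) :
    ∃ A c : ℝ, 0 < A ∧ 0 < c ∧ ∀ (E : ℝ) (φ : ℤ → ℝ), |E| ≤ 2 + 2 * lam →
      IsEigenfunction (amoPot lam α θ) E φ → (∀ n, |φ n| ≤ 1) →
      ∀ ℓ : ℤ, |φ j * φ ℓ| ≤ A * Real.exp (-(c * |(ℓ : ℝ) - j|)) := by
  obtain ⟨δ', hδδ', hδ'⟩ := exists_between hδ
  obtain ⟨A, c, hA, hc, H⟩ := exists_abs_zero_mul_le_exp hlam hα (hδ₀.trans hδδ') hδ'
    (eventually_exp_le_distToInt_translate hδ₀ hδδ' hphase j)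
  refine ⟨A, c, hA, hc, fun E φ hE h hφ ℓ => ?_⟩
  simpa using H E _ hE (h.translate j) (fun n => hφ _) (ℓ - j)

/-! ### Growth of approximate solutions -/

lemma abs_le_pow_mul_of_recurrence {u a : ℕ → ℝ} {Λ s : ℝ} (hΛ : 2 ≤ Λ) (ha : ∀ j, |a j| ≤ Λ - 2)
    (hu : ∀ j, |u (j + 2) + u j - a j * u (j + 1)| ≤ s) (h₀ : |u 0| ≤ s) (h₁ : |u 1| ≤ s) (j : ℕ) :
    |u j| ≤ Λ ^ j * s ∧ |u (j + 1)| ≤ Λ ^ j * s := by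
  have hs : 0 ≤ s := (abs_nonneg _).trans h₀
  induction j with
  | zero => simpa using ⟨h₀, h₁⟩
  | succ j ih =>
    have hpow : s ≤ Λ ^ j * s := le_mul_of_one_le_left hs (one_le_pow₀ (by linarith))
    have hstep : |u (j + 2)| ≤ Λ ^ (j + 1) * s := by
      calc |u (j + 2)| = |(u (j + 2) + u j - a j * u (j + 1)) + (a j * u (j + 1) + -u j)| := by
            ring_nf
        _ ≤ s + (|a j| * |u (j + 1)| + |u j|) := by
            refine (abs_add_le _ _).trans (add_le_add (hu j) ((abs_add_le _ _).trans ?_))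
            rw [abs_mul, abs_neg]
        _ ≤ Λ ^ j * s + ((Λ - 2) * (Λ ^ j * s) + Λ ^ j * s) := by
            exact add_le_add hpow (add_le_add (mul_le_mul (ha j) ih.2 (abs_nonneg _)
              ((abs_nonneg _).trans (ha j))) ih.1)
        _ = Λ ^ (j + 1) * s := by ring
    refine ⟨ih.2.trans ?_, hstep⟩
    gcongr
    exacts [by linarith, by omega]

lemma abs_le_exp_mul_of_recurrence {u a : ℤ → ℝ} {b s : ℝ} (hb : 2 ≤ Real.exp b)
    (ha : ∀ k, |a k| ≤ Real.exp b - 2) (hu : ∀ k, |u (k + 1) + u (k - 1) - a k * u k| ≤ s) {m : ℤ}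
    (h₀ : |u m| ≤ s) (h₁ : |u (m + 1)| ≤ s) (n : ℤ) :
    |u n| ≤ Real.exp (b * |(n : ℝ) - m|) * s := by
  have hexp (j : ℕ) (hj : |(n : ℝ) - m| = j) : Real.exp b ^ j = Real.exp (b * |(n : ℝ) - m|) := by
    rw [hj, mul_comm, Real.exp_nat_mul]
  rcases le_total m n with hmn | hnm
  · obtain ⟨j, rfl⟩ : ∃ j : ℕ, n = m + j := ⟨(n - m).toNat, by omega⟩
    rw [← hexp j (by simp)]
    refine (abs_le_pow_mul_of_recurrence (u := fun j : ℕ => u (m + j))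
      (a := fun j : ℕ => a (m + j + 1)) hb (fun j => ha _) (fun j => ?_) (by simpa using h₀)
      (by simpa using h₁) j).1
    have hj := hu (m + j + 1)
    rw [add_sub_cancel_right, add_assoc _ 1 1] at hj
    simpa [add_assoc] using hj
  · obtain ⟨j, rfl⟩ : ∃ j : ℕ, n = m - j := ⟨(m - n).toNat, by omega⟩
    rw [← hexp j (by simp)]
    have hj := (abs_le_pow_mul_of_recurrence (u := fun j : ℕ => u (m + 1 - j))
      (a := fun j : ℕ => a (m - j)) hb (fun j => ha _) (fun j => ?_) (by simpa using h₁)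
      (by simpa using h₀) j).2
    · simpa using hj
    · have hj := hu (m - j)
      rw [add_comm (u _)] at hj
      convert hj using 4 <;> push_cast <;> ring_nf

/-! ### Strong reflection resonances exclude decaying eigenfunctions -/

lemma abs_le_or_abs_le_of_abs_mul_le_sq {A B r : ℝ} (hr : 0 ≤ r) (h : |A * B| ≤ r ^ 2) :
    |A| ≤ r ∨ |B| ≤ r := by
  by_contra! hAB
  rw [abs_mul, sq] at h
  exact h.not_gt (mul_lt_mul'' hAB.1 hAB.2 hr hr)

/-- The Wronskian at `k` of `φ` and of its reflection `j ↦ φ (n - j)`. -/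
def reflWronskian (φ : ℤ → ℝ) (n k : ℤ) : ℝ := φ (k + 1) * φ (n - k) - φ k * φ (n - (k + 1))

section Reflection

variable {V φ : ℤ → ℝ} {E η : ℝ} {n : ℤ}

lemma IsEigenfunction.reflWronskian_succ_sub (h : IsEigenfunction V E φ) (n k : ℤ) :
    reflWronskian φ n (k + 1) - reflWronskian φ n k =
      (V (n - (k + 1)) - V (k + 1)) * (φ (k + 1) * φ (n - (k + 1))) := by
  have hk := h (k + 1)
  have hnk := h (n - (k + 1))
  rw [add_sub_cancel_right] at hk
  rw [show n - (k + 1) + 1 = n - k by ring, sub_sub n (k + 1) 1] at hnk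
  unfold reflWronskian
  linear_combination φ (n - (k + 1)) * hk - φ (k + 1) * hnk

lemma tendsto_reflWronskian (hφ : Tendsto φ cofinite (nhds 0)) (n k : ℤ) :
    Tendsto (fun j : ℕ => reflWronskian φ n (k + j)) atTop (nhds 0) := by
  have hlim (f : ℕ → ℤ) (hf : Function.Injective f) :
      Tendsto (fun j => φ (f j)) atTop (nhds 0) := by
    rw [← Nat.cofinite_eq_atTop]
    exact hφ.comp hf.tendsto_cofinite
  simpa only [reflWronskian, mul_zero, sub_zero] using
    ((hlim (fun j => k + j + 1) fun i j hij => by simpa using hij).mul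
      (hlim (fun j => n - (k + j)) fun i j hij => by simpa using hij)).sub
    ((hlim (fun j => k + j) fun i j hij => by simpa using hij).mul
      (hlim (fun j => n - (k + j + 1)) fun i j hij => by simpa using hij))

lemma tendsto_cofinite_zero_of_summable_sq (hφ : Summable fun k => φ k ^ 2) :
    Tendsto φ cofinite (nhds 0) := by
  have hsqrt := hφ.tendsto_cofinite_zero.sqrt
  simp only [Real.sqrt_sq_eq_abs, Real.sqrt_zero] at hsqrt
  exact (tendsto_zero_iff_abs_tendsto_zero _).2 hsqrt

lemma IsEigenfunction.abs_reflWronskian_le (h : IsEigenfunction V E φ)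
    (hφ : Summable fun k => φ k ^ 2) (hη : 0 ≤ η) (hV : ∀ k, |V (n - k) - V k| ≤ η) (k : ℤ) :
    |reflWronskian φ n k| ≤ η * ∑' j, φ j ^ 2 := by
  have hright : Function.Injective fun j : ℕ => k + j + 1 := fun i j hij => by simpa using hij
  have hleft : Function.Injective fun j : ℕ => n - (k + j + 1) := fun i j hij => by simpa using hij
  have hsum := ((hφ.comp_injective hright).add (hφ.comp_injective hleft)).mul_left (η / 2)
  have hstep (j : ℕ) : dist (reflWronskian φ n (k + j)) (reflWronskian φ n (k + (j + 1 : ℕ))) ≤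
      η / 2 * (φ (k + j + 1) ^ 2 + φ (n - (k + j + 1)) ^ 2) := by
    rw [dist_comm, Real.dist_eq, Nat.cast_succ, ← add_assoc, h.reflWronskian_succ_sub, abs_mul,
      div_mul_eq_mul_div, mul_div_assoc]
    gcongr
    · exact hV _
    · rw [abs_mul, ← sq_abs (φ (k + j + 1)), ← sq_abs (φ (n - _))]
      linarith [two_mul_le_add_sq |φ (k + j + 1)| |φ (n - (k + j + 1))|]
  have hdist := dist_le_tsum_of_dist_le_of_tendsto₀ _ hstep hsum
    (tendsto_reflWronskian (tendsto_cofinite_zero_of_summable_sq hφ) n k)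
  rw [Nat.cast_zero, add_zero, dist_zero_right, Real.norm_eq_abs] at hdist
  refine hdist.trans ?_
  have hright_le := tsum_comp_le_tsum_of_inj hφ (fun _ => sq_nonneg _) hright
  have hleft_le := tsum_comp_le_tsum_of_inj hφ (fun _ => sq_nonneg _) hleft
  have hadd := (hφ.comp_injective hright).tsum_add (hφ.comp_injective hleft)
  simp only [Function.comp_def] at hadd hright_le hleft_le
  rw [tsum_mul_left, hadd, div_mul_eq_mul_div, mul_div_assoc]
  gcongr
  linarith [hright_le, hleft_le]

lemma IsEigenfunction.exists_sign_abs_add_reflect_le {Λ r : ℝ} (h : IsEigenfunction V E φ)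
    (hV : ∀ k, |E - V k| ≤ Λ - 2) (hr : 0 ≤ r) (hW : |reflWronskian φ n (n / 2)| ≤ r ^ 2) :
    ∃ σ : ℝ, |σ| = 1 ∧ |φ (n / 2) + σ * φ (n - n / 2)| ≤ Λ * r ∧
      |φ (n / 2 + 1) + σ * φ (n - (n / 2 + 1))| ≤ Λ * r := by
  have hΛ : 2 ≤ Λ := by linarith [abs_nonneg (E - V 0), hV 0]
  have hrΛ : r ≤ Λ * r := le_mul_of_one_le_left hr (by linarith)
  generalize hm : n / 2 = m at hW ⊢
  unfold reflWronskian at hW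
  rcases Int.even_or_odd' n with ⟨i, rfl | rfl⟩
  · obtain rfl : m = i := by omega
    rw [show 2 * m - m = m by ring, show 2 * m - (m + 1) = m - 1 by ring] at hW ⊢
    rw [show φ (m + 1) * φ m - φ m * φ (m - 1) = φ m * (φ (m + 1) - φ (m - 1)) by ring] at hW
    rcases abs_le_or_abs_le_of_abs_mul_le_sq hr hW with hφm | hdiff
    · refine ⟨1, abs_one, ?_, ?_⟩
      · rw [one_mul, ← two_mul, abs_mul, abs_two]
        gcongr
      · have hm1 : φ (m + 1) + 1 * φ (m - 1) = (E - V m) * φ m := by linear_combination h m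
        rw [hm1, abs_mul]
        gcongr
        linarith [hV m]
    · refine ⟨-1, by simp, ?_, ?_⟩
      · simpa using hr.trans hrΛ
      · rw [neg_one_mul, ← sub_eq_add_neg]
        exact hdiff.trans hrΛ
  · obtain rfl : m = i := by omega
    rw [show 2 * m + 1 - m = m + 1 by ring, show 2 * m + 1 - (m + 1) = m by ring] at hW ⊢
    rw [show φ (m + 1) * φ (m + 1) - φ m * φ m =
      (φ (m + 1) - φ m) * (φ (m + 1) + φ m) by ring] at hW
    rcases abs_le_or_abs_le_of_abs_mul_le_sq hr hW with hdiff | hsum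
    · refine ⟨-1, by simp, ?_, ?_⟩ <;> rw [neg_one_mul, ← sub_eq_add_neg]
      exacts [(abs_sub_comm _ _).le.trans (hdiff.trans hrΛ), hdiff.trans hrΛ]
    · refine ⟨1, abs_one, ?_, ?_⟩ <;> rw [one_mul]
      exacts [(add_comm (φ m) _ ▸ hsum).trans hrΛ, hsum.trans hrΛ]

lemma IsEigenfunction.abs_le_abs_reflect_add {b r : ℝ} (h : IsEigenfunction V E φ)
    (hφ : Summable fun k => φ k ^ 2) (hφ_le : ∑' k, φ k ^ 2 ≤ 1) (hφ_abs : ∀ k, |φ k| ≤ 1)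
    (hE : ∀ k, |E - V k| ≤ Real.exp b - 2) (hr : 0 ≤ r) (hr_le : r ≤ 1)
    (hV : ∀ k, |V (n - k) - V k| ≤ r ^ 2) (k : ℤ) :
    |φ k| ≤ |φ (n - k)| + Real.exp (b * (|(k : ℝ)| + |(n : ℝ)| + 1)) * r := by
  have hb : 2 ≤ Real.exp b := by linarith [abs_nonneg (E - V 0), hE 0]
  have hb₀ : 0 ≤ b := Real.one_le_exp_iff.1 (by linarith)
  have hW : |reflWronskian φ n (n / 2)| ≤ r ^ 2 :=
    (h.abs_reflWronskian_le hφ (sq_nonneg r) hV _).trans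
      (mul_le_of_le_one_right (sq_nonneg r) hφ_le)
  obtain ⟨σ, hσ, h₀, h₁⟩ := h.exists_sign_abs_add_reflect_le hE hr hW
  have hsource (j : ℤ) : |(φ (j + 1) + σ * φ (n - (j + 1))) + (φ (j - 1) + σ * φ (n - (j - 1))) -
      (E - V j) * (φ j + σ * φ (n - j))| ≤ Real.exp b * r := by
    have hj := h j
    have hnj := h (n - j)
    rw [show n - (j + 1) = n - j - 1 by ring, show n - (j - 1) = n - j + 1 by ring,
      show (φ (j + 1) + σ * φ (n - j - 1)) + (φ (j - 1) + σ * φ (n - j + 1)) -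
        (E - V j) * (φ j + σ * φ (n - j)) = -(σ * ((V (n - j) - V j) * φ (n - j))) by
          linear_combination hj + σ * hnj, abs_neg, abs_mul, hσ, one_mul, abs_mul]
    calc |V (n - j) - V j| * |φ (n - j)| ≤ r ^ 2 * 1 := by gcongr; exacts [hV j, hφ_abs _]
      _ ≤ Real.exp b * r := by nlinarith
  have hΨ := abs_le_exp_mul_of_recurrence (u := fun j => φ j + σ * φ (n - j)) hb hE hsource h₀ h₁ k
  have hdist : |(k : ℝ) - (n / 2 : ℤ)| ≤ |(k : ℝ)| + |(n : ℝ)| := by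
    have hint : |k - n / 2| ≤ |k| + |n| := by
      simp only [Int.abs_eq_natAbs]
      omega
    exact_mod_cast hint
  calc |φ k| = |(φ k + σ * φ (n - k)) + -(σ * φ (n - k))| := by rw [add_neg_cancel_right]
    _ ≤ |φ k + σ * φ (n - k)| + |φ (n - k)| := by
      refine (abs_add_le _ _).trans_eq ?_
      rw [abs_neg, abs_mul, hσ, one_mul]
    _ ≤ Real.exp (b * |(k : ℝ) - (n / 2 : ℤ)|) * (Real.exp b * r) + |φ (n - k)| := by gcongr
    _ = |φ (n - k)| + Real.exp (b * (|(k : ℝ) - (n / 2 : ℤ)| + 1)) * r := by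
      rw [mul_add_one, Real.exp_add]; ring
    _ ≤ |φ (n - k)| + Real.exp (b * (|(k : ℝ)| + |(n : ℝ)| + 1)) * r := by gcongr

end Reflection

section AlmostMathieu

variable {lam α θ E : ℝ} {φ : ℤ → ℝ}

lemma abs_amoPot_le (hlam : 0 ≤ lam) (k : ℤ) : |amoPot lam α θ k| ≤ 2 * lam := by
  rw [amoPot, abs_mul, abs_of_nonneg (by positivity)]
  exact mul_le_of_le_one_right (by positivity) (Real.abs_cos_le_one _)

lemma abs_sub_amoPot_le (hlam : 0 ≤ lam) (hE : |E| ≤ 2 + 2 * lam) (k : ℤ) :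
    |E - amoPot lam α θ k| ≤ 2 + 4 * lam := by
  have hpot := abs_amoPot_le (α := α) (θ := θ) hlam k
  linarith [abs_sub E (amoPot lam α θ k), hE]

lemma abs_amoPot_reflect_sub_le (hlam : 0 ≤ lam) (n k : ℤ) :
    |amoPot lam α θ (n - k) - amoPot lam α θ k| ≤ 16 * lam * distToInt (2 * θ + n * α) := by
  have hchord := abs_cos_sub_cos_eq_chord (θ + (n - k : ℤ) * α) (θ + k * α)
  rw [show θ + (n - k : ℤ) * α + (θ + k * α) = 2 * θ + n * α by push_cast; ring] at hchord
  rw [amoPot, amoPot, ← mul_sub, abs_mul, hchord, abs_of_nonneg (by positivity)]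
  have hd := distToInt_nonneg (2 * θ + n * α)
  calc 2 * lam * (1 / 2 * (chord (2 * θ + n * α) * chord (θ + (n - k : ℤ) * α - (θ + k * α))))
      ≤ 2 * lam * (1 / 2 * (2 * 4 * distToInt (2 * θ + n * α) * 2)) := by
        gcongr
        · exact chord_nonneg _
        · exact (chord_le_distToInt _).trans (by gcongr; exact Real.pi_le_four)
        · exact chord_le_two _
    _ = 16 * lam * distToInt (2 * θ + n * α) := by ring

lemma IsEigenfunction.abs_le_abs_reflect_add_exp {b : ℝ} {n : ℤ} (hlam : 1 ≤ lam)
    (hb : Real.exp b = 4 + 4 * lam) (h : IsEigenfunction (amoPot lam α θ) E φ)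
    (hE : |E| ≤ 2 + 2 * lam) (hφ : Summable fun k => φ k ^ 2) (hφ_le : ∑' k, φ k ^ 2 ≤ 1)
    (hφ_abs : ∀ k, |φ k| ≤ 1) (hn : 4 * lam * Real.exp (-(2 * b * |(n : ℝ)|)) ≤ 1)
    (hres : distToInt (2 * θ + n * α) ≤ Real.exp (-(4 * b * |(n : ℝ)|))) (k : ℤ) :
    |φ k| ≤ |φ (n - k)| +
      4 * lam * Real.exp (b * (|(k : ℝ)| + 1)) * Real.exp (-(b * |(n : ℝ)|)) := by
  have hpot (j : ℤ) : |E - amoPot lam α θ j| ≤ Real.exp b - 2 :=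
    (abs_sub_amoPot_le (zero_le_one.trans hlam) hE j).trans (by linarith)
  have hreflect (j : ℤ) : |amoPot lam α θ (n - j) - amoPot lam α θ j| ≤
      (4 * lam * Real.exp (-(2 * b * |(n : ℝ)|))) ^ 2 :=
    calc |amoPot lam α θ (n - j) - amoPot lam α θ j|
        ≤ 16 * lam * distToInt (2 * θ + n * α) := abs_amoPot_reflect_sub_le (by linarith) n j
      _ ≤ 16 * lam ^ 2 * Real.exp (-(4 * b * |(n : ℝ)|)) := by
        gcongr
        exacts [distToInt_nonneg _, le_self_pow₀ hlam two_ne_zero]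
      _ = (4 * lam * Real.exp (-(2 * b * |(n : ℝ)|))) ^ 2 := by
        rw [mul_pow, ← Real.exp_nat_mul]; ring_nf
  refine (h.abs_le_abs_reflect_add hφ hφ_le hφ_abs hpot (by positivity) hn hreflect k).trans_eq ?_
  rw [mul_left_comm, mul_assoc (4 * lam), ← Real.exp_add, ← Real.exp_add]
  ring_nf

lemma tendsto_exp_neg_mul_abs_intCast {c : ℝ} (hc : 0 < c) :
    Tendsto (fun n : ℤ => Real.exp (-(c * |(n : ℝ)|))) cofinite (nhds 0) :=
  Real.tendsto_exp_neg_atTop_nhds_zero.comp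
    ((tendsto_norm_cocompact_atTop.comp Int.tendsto_coe_cofinite).const_mul_atTop hc)

/-- At each resonance `n` the potential is almost symmetric about `n / 2`, so `|φ k|` is almost
`|φ (n - k)|`, which tends to `0` along the resonances. -/
lemma IsEigenfunction.eq_zero_of_frequently_resonant {b : ℝ} (hlam : 1 ≤ lam)
    (hb : Real.exp b = 4 + 4 * lam) (h : IsEigenfunction (amoPot lam α θ) E φ)
    (hE : |E| ≤ 2 + 2 * lam) (hφ : Summable fun k => φ k ^ 2) (hφ_le : ∑' k, φ k ^ 2 ≤ 1)
    (hφ_abs : ∀ k, |φ k| ≤ 1)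
    (hres : ∃ᶠ n : ℤ in cofinite,
      distToInt (2 * θ + n * α) ≤ Real.exp (-(4 * b * |(n : ℝ)|))) (k : ℤ) :
    φ k = 0 := by
  have hb₀ : 0 < b := Real.one_lt_exp_iff.1 (by linarith)
  have hdecay := (tendsto_zero_iff_abs_tendsto_zero _).1 (tendsto_cofinite_zero_of_summable_sq hφ)
  have hreflect : Tendsto (fun n : ℤ => |φ (n - k)|) cofinite (nhds 0) :=
    hdecay.comp (sub_left_injective (b := k)).tendsto_cofinite
  have hlim := hreflect.add ((tendsto_exp_neg_mul_abs_intCast hb₀).const_mul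
    (4 * lam * Real.exp (b * (|(k : ℝ)| + 1))))
  rw [mul_zero, add_zero] at hlim
  have hsmall : ∀ᶠ n : ℤ in cofinite, 4 * lam * Real.exp (-(2 * b * |(n : ℝ)|)) ≤ 1 := by
    have htendsto := (tendsto_exp_neg_mul_abs_intCast (mul_pos two_pos hb₀)).const_mul (4 * lam)
    rw [mul_zero] at htendsto
    exact htendsto.eventually_le_const one_pos
  exact abs_nonpos_iff.1 (ge_of_tendsto_of_frequently hlim ((hres.and_eventually hsmall).mono
    fun n hn => h.abs_le_abs_reflect_add_exp hlam hb hE hφ hφ_le hφ_abs hn.2 hn.1 k))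

end AlmostMathieu

/-! ### The product bound -/

lemma IsEigenfunction.abs_energy_le {V φ : ℤ → ℝ} {E v : ℝ} (h : IsEigenfunction V E φ)
    (hV : ∀ k, |V k| ≤ v) (hφ : Tendsto φ cofinite (nhds 0)) (hφ₀ : φ ≠ 0) : |E| ≤ 2 + v := by
  obtain ⟨i, hi⟩ := Function.ne_iff.1 hφ₀
  have hfar : ∀ᶠ k in cocompact ℤ, |φ k| ≤ |φ i| := by
    rw [cocompact_eq_cofinite]
    exact ((tendsto_zero_iff_abs_tendsto_zero _).1 hφ).eventually_le_const (abs_pos.2 hi)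
  obtain ⟨m, hm⟩ := (continuous_of_discreteTopology (f := fun k => |φ k|)).exists_forall_ge' i hfar
  refine le_of_mul_le_mul_right ?_ ((abs_pos.2 hi).trans_le (hm i))
  calc |E| * |φ m| = |φ (m + 1) + φ (m - 1) + V m * φ m| := by rw [h m, abs_mul]
    _ ≤ |φ (m + 1)| + |φ (m - 1)| + |V m| * |φ m| := by
      rw [← abs_mul]; exact abs_add_three _ _ _
    _ ≤ |φ m| + |φ m| + v * |φ m| :=
      add_le_add (add_le_add (hm _) (hm _)) (mul_le_mul_of_nonneg_right (hV m) (abs_nonneg _))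
    _ = (2 + v) * |φ m| := by ring

lemma IsEigenfunction.abs_le_exp_mul {V φ : ℤ → ℝ} {E b : ℝ} (h : IsEigenfunction V E φ)
    (hb : 2 ≤ Real.exp b) (hV : ∀ k, |E - V k| ≤ Real.exp b - 2) (n : ℤ) :
    |φ n| ≤ Real.exp (b * |(n : ℝ)|) * (|φ 0| + |φ 1|) := by
  have hsource (k : ℤ) : |φ (k + 1) + φ (k - 1) - (E - V k) * φ k| ≤ |φ 0| + |φ 1| := by
    rw [show φ (k + 1) + φ (k - 1) - (E - V k) * φ k = 0 by linear_combination h k, abs_zero]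
    positivity
  simpa using abs_le_exp_mul_of_recurrence (m := 0) hb hV hsource
    (le_add_of_nonneg_right (abs_nonneg _)) (by simp) n

lemma exists_eventually_exp_le_distToInt {α θ B L : ℝ} (hL : 0 < L) (hδ : deltaPhase α θ < L)
    (hB : ∀ᶠ n : ℤ in cofinite, Real.exp (-(B * |(n : ℝ)|)) ≤ distToInt (2 * θ + n * α)) :
    ∃ δ : ℝ, 0 < δ ∧ δ < L ∧
      ∀ᶠ n : ℤ in cofinite, Real.exp (-(δ * |(n : ℝ)|)) ≤ distToInt (2 * θ + n * α) := by
  have hiff (a : ℝ) : ∀ᶠ n : ℤ in cofinite,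
      (-Real.log (distToInt (2 * θ + n * α)) / |(n : ℝ)| ≤ a ↔
        Real.exp (-(a * |(n : ℝ)|)) ≤ distToInt (2 * θ + n * α)) := by
    filter_upwards [hB, eventually_cofinite_ne 0] with n hn hn₀
    rw [div_le_iff₀ (abs_pos.2 (Int.cast_ne_zero.2 hn₀)), neg_le,
      Real.le_log_iff_exp_le ((Real.exp_pos _).trans_le hn)]
  have hne : {a : ℝ | ∀ᶠ n : ℤ in cofinite,
      -Real.log (distToInt (2 * θ + n * α)) / |(n : ℝ)| ≤ a}.Nonempty :=
    ⟨B, by filter_upwards [hB, hiff B] with n hn hnB using hnB.2 hn⟩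
  rw [deltaPhase, limsup_eq] at hδ
  obtain ⟨a, ha, haL⟩ := exists_lt_of_csInf_lt hne hδ
  refine ⟨max a (L / 2), lt_max_of_lt_right (half_pos hL), max_lt haL (half_lt_self hL), ?_⟩
  filter_upwards [ha, hiff (max a (L / 2))] with n hn hna
  exact hna.1 (hn.trans (le_max_left _ _))

lemma exists_abs_zero_add_abs_one_mul_le_exp {lam α θ δ : ℝ} (hlam : 0 < lam)
    (hα : IsDiophantine α) (hδ₀ : 0 < δ) (hδ : δ < Real.log lam)
    (hphase : ∀ᶠ n : ℤ in cofinite, Real.exp (-(δ * |(n : ℝ)|)) ≤ distToInt (2 * θ + n * α)) :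
    ∃ A c : ℝ, 0 < A ∧ 0 < c ∧ ∀ (E : ℝ) (φ : ℤ → ℝ), |E| ≤ 2 + 2 * lam →
      IsEigenfunction (amoPot lam α θ) E φ → (∀ n, |φ n| ≤ 1) →
      ∀ ℓ : ℤ, (|φ 0| + |φ 1|) * |φ ℓ| ≤ A * Real.exp (-(c * |(ℓ : ℝ)|)) := by
  obtain ⟨A₀, c₀, hA₀, hc₀, H₀⟩ := exists_abs_mul_le_exp hlam hα hδ₀ hδ hphase 0
  obtain ⟨A₁, c₁, hA₁, hc₁, H₁⟩ := exists_abs_mul_le_exp hlam hα hδ₀ hδ hphase 1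
  refine ⟨A₀ + A₁ * Real.exp c₁, min c₀ c₁, by positivity, lt_min hc₀ hc₁,
    fun E φ hE h hφ ℓ => ?_⟩
  rw [add_mul, add_mul, ← abs_mul, ← abs_mul]
  refine add_le_add ((H₀ E φ hE h hφ ℓ).trans ?_) ((H₁ E φ hE h hφ ℓ).trans ?_)
  · rw [Int.cast_zero, sub_zero]
    exact mul_exp_neg_mul_le le_rfl hA₀.le (min_le_left _ _) (abs_nonneg _)
  · refine le_trans ?_
      (mul_exp_neg_mul_le le_rfl (by positivity) (min_le_right c₀ c₁) (abs_nonneg (ℓ : ℝ)))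
    rw [mul_assoc, ← Real.exp_add, Int.cast_one]
    gcongr
    have hℓ : c₁ * (|(ℓ : ℝ)| - 1) ≤ c₁ * |(ℓ : ℝ) - 1| := by
      gcongr
      simpa using abs_sub_abs_le_abs_sub (ℓ : ℝ) 1
    linarith

lemma exists_abs_mul_le_exp_of_nonresonant {lam α θ δ : ℝ} (hlam : 0 < lam)
    (hα : IsDiophantine α) (hδ₀ : 0 < δ) (hδ : δ < Real.log lam)
    (hphase : ∀ᶠ n : ℤ in cofinite, Real.exp (-(δ * |(n : ℝ)|)) ≤ distToInt (2 * θ + n * α)) :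
    ∃ C C₁ C₂ : ℝ, 0 < C ∧ 0 < C₁ ∧ 0 < C₂ ∧ ∀ (E : ℝ) (φ : ℤ → ℝ), |E| ≤ 2 + 2 * lam →
      IsEigenfunction (amoPot lam α θ) E φ → (∀ n, |φ n| ≤ 1) →
      ∀ n ℓ : ℤ,
        |φ n * φ ℓ| ≤ C * Real.exp (-C₁ * |(n : ℝ) - (ℓ : ℝ)| + C₂ * |(n : ℝ)|) := by
  obtain ⟨A, c, hA, hc, H⟩ := exists_abs_zero_add_abs_one_mul_le_exp hlam hα hδ₀ hδ hphase
  have hb : Real.exp (Real.log (4 + 4 * lam)) = 4 + 4 * lam := Real.exp_log (by positivity)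
  generalize Real.log (4 + 4 * lam) = b at hb
  have hb₀ : 0 < b := Real.one_lt_exp_iff.1 (by linarith)
  refine ⟨A, c, b + c, hA, hc, by positivity, fun E φ hE h hφ n ℓ => ?_⟩
  have hgrowth := h.abs_le_exp_mul (b := b) (by linarith)
    (fun k => (abs_sub_amoPot_le hlam.le hE k).trans (by linarith)) n
  calc |φ n * φ ℓ| ≤ Real.exp (b * |(n : ℝ)|) * (|φ 0| + |φ 1|) * |φ ℓ| := by
        rw [abs_mul]; gcongr
    _ ≤ Real.exp (b * |(n : ℝ)|) * (A * Real.exp (-(c * |(ℓ : ℝ)|))) := by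
      rw [mul_assoc]
      exact mul_le_mul_of_nonneg_left (H E φ hE h hφ ℓ) (Real.exp_nonneg _)
    _ = A * Real.exp (b * |(n : ℝ)| + -(c * |(ℓ : ℝ)|)) := by rw [mul_left_comm, Real.exp_add]
    _ ≤ A * Real.exp (-c * |(n : ℝ) - ℓ| + (b + c) * |(n : ℝ)|) := by
      refine mul_le_mul_of_nonneg_left (Real.exp_le_exp.2 ?_) hA.le
      have hnℓ : c * |(n : ℝ) - ℓ| ≤ c * (|(n : ℝ)| + |(ℓ : ℝ)|) := by
        gcongr; exact abs_sub _ _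
      linarith

/-- A real `limsup` has the junk value `0` when the sequence is not bounded above, so the hypothesis
on `deltaPhase` does not by itself control the small divisors `2 * θ + n * α`. -/
lemma exists_abs_mul_le_exp_of_deltaPhase_lt {lam α θ : ℝ} (hlam : 1 < lam)
    (hα : IsDiophantine α) (hδ : deltaPhase α θ < Real.log lam) :
    ∃ C C₁ C₂ : ℝ, 0 < C ∧ 0 < C₁ ∧ 0 < C₂ ∧ ∀ (E : ℝ) (φ : ℤ → ℝ), |E| ≤ 2 + 2 * lam →
      IsEigenfunction (amoPot lam α θ) E φ → (Summable fun k => φ k ^ 2) →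
      ∑' k, φ k ^ 2 ≤ 1 → (∀ n, |φ n| ≤ 1) → ∀ n ℓ : ℤ,
        |φ n * φ ℓ| ≤ C * Real.exp (-C₁ * |(n : ℝ) - (ℓ : ℝ)| + C₂ * |(n : ℝ)|) := by
  have hlam₀ : 0 < lam := one_pos.trans hlam
  by_cases hres : ∃ᶠ n : ℤ in cofinite, distToInt (2 * θ + n * α) ≤
      Real.exp (-(4 * Real.log (4 + 4 * lam) * |(n : ℝ)|))
  · refine ⟨1, 1, 1, one_pos, one_pos, one_pos, fun E φ hE h hsum hsum_le hφ n ℓ => ?_⟩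
    rw [h.eq_zero_of_frequently_resonant hlam.le (Real.exp_log (by positivity)) hE hsum hsum_le hφ
      hres n, zero_mul, abs_zero]
    positivity
  · have hB := (not_frequently.1 hres).mono fun n hn => (not_le.1 hn).le
    obtain ⟨δ, hδ₀, hδ_lt, hphase⟩ := exists_eventually_exp_le_distToInt (Real.log_pos hlam) hδ hB
    obtain ⟨C, C₁, C₂, hC, hC₁, hC₂, H⟩ :=
      exists_abs_mul_le_exp_of_nonresonant hlam₀ hα hδ₀ hδ_lt hphase
    exact ⟨C, C₁, C₂, hC, hC₁, hC₂, fun E φ hE h _ _ hφ => H E φ hE h hφ⟩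

lemma hasSum_sq_lp_two {ι : Type*} (φ : lp (fun _ : ι => ℝ) 2) :
    HasSum (fun k => φ k ^ 2) (‖φ‖ ^ 2) := by
  simpa using lp.hasSum_norm (p := 2) (by norm_num) φ

theorem amo_eigenfunction_product_bound_general {lam α θ : ℝ} (hlam : 1 < lam)
    (hα : IsDiophantine α) (hδ : deltaPhase α θ < Real.log lam) :
    ∃ C C₁ C₂ : ℝ, 0 < C ∧ 0 < C₁ ∧ 0 < C₂ ∧
      ∀ (E : ℝ) (φ : lp (fun _ : ℤ => ℝ) 2), ‖φ‖ ≤ 1 →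
        IsEigenfunction (amoPot lam α θ) E (fun n => φ n) → ∀ n ℓ : ℤ,
          |φ n * φ ℓ| ≤ C * Real.exp (-C₁ * |(n : ℝ) - (ℓ : ℝ)| + C₂ * |(n : ℝ)|) := by
  obtain ⟨C, C₁, C₂, hC, hC₁, hC₂, H⟩ := exists_abs_mul_le_exp_of_deltaPhase_lt hlam hα hδ
  refine ⟨C, C₁, C₂, hC, hC₁, hC₂, fun E φ hφ h n ℓ => ?_⟩
  by_cases hφ₀ : (fun k => φ k) = 0
  · rw [show φ n = 0 from congrFun hφ₀ n, zero_mul, abs_zero]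
    positivity
  have hsum := hasSum_sq_lp_two φ
  refine H E _ ?_ h hsum.summable (hsum.tsum_eq.trans_le (pow_le_one₀ (norm_nonneg _) hφ))
    (fun k => (lp.norm_apply_le_norm two_ne_zero φ k).trans hφ) n ℓ
  exact h.abs_energy_le (abs_amoPot_le (one_pos.trans hlam).le)
    (tendsto_cofinite_zero_of_summable_sq hsum.summable) hφ₀

theorem amo_eigenfunction_product_bound
    (lam α θ : ℝ) (hlam : 1 < lam) (hα : IsDiophantine α)
    (hδ : deltaPhase α θ < Real.log lam)
    (Φ : HilbertBasis ℕ ℝ (lp (fun _ : ℤ => ℝ) 2))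
    (heig : ∀ s : ℕ, ∃ E : ℝ, IsEigenfunction (amoPot lam α θ) E (fun n => Φ s n))
    (m : ℕ → ℤ) (hm : ∀ (s : ℕ) (n : ℤ), |Φ s n| ≤ |Φ s (m s)|) :
    ∃ C C₁ C₂ : ℝ, 0 < C ∧ 0 < C₁ ∧ 0 < C₂ ∧
      ∃ M : ℕ, ∀ s : ℕ, (M : ℤ) ≤ |m s| →
        ∀ n ℓ : ℤ,
          |Φ s n * Φ s ℓ| ≤
            C * Real.exp (-C₁ * |(n : ℝ) - (ℓ : ℝ)| + C₂ * |(n : ℝ)|) := by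
  obtain ⟨C, C₁, C₂, hC, hC₁, hC₂, H⟩ := amo_eigenfunction_product_bound_general hlam hα hδ
  exact ⟨C, C₁, C₂, hC, hC₁, hC₂, 0, fun s _ =>
    (heig s).elim fun E hE => H E (Φ s) (Φ.orthonormal.1 s).le hE⟩
end
end

section
/- Let g : ℤ → ℝ be bounded, E ∈ ℝ, and let u be a normalized eigensolution: u(n+1) + u(n−1) + g(n)u(n) = E·u(n) for all n and Σ_n |u(n)|² = 1. Suppose there are ε > 0, C > 0 and a sequence of integers k_i with |k_i| → ∞ such that |g(n) − g(k_i − n)| ≤ C·e^{−ε|k_i|} for all n ∈ ℤ and all i. Set Φ(n) = (u(n), u(n−1))ᵀ and Φ_i(n) = (u(k_i − n), u(k_i − n + 1))ᵀ. Then there exist C′ > 0 and I such that for all i ≥ I: if k_i is even, there exists ι ∈ {−1, 1} with ‖Φ(k_i/2) + ι·Φ_i(k_i/2)‖ ≤ C′·e^{−(ε/2)|k_i|}; and if k_i is odd, there exists ι ∈ {−1, 1} with ‖Φ((k_i−1)/2 + 1) + ι·Φ_i((k_i−1)/2 + 1)‖ ≤ C′·e^{−(ε/2)|k_i|}. -/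
noncomputable section

open Filter Real

/-- Euclidean norm of the vector (a, b)ᵀ ∈ ℝ². -/
def pairNorm (a b : ℝ) : ℝ := Real.sqrt (a ^ 2 + b ^ 2)

/-!
The reflected sequence `v n = u (k - n)` solves the eigenvalue equation with the potential
`n ↦ g (k - n)`, which is `δ`-close to `g`. The Wronskian of `u` and `v` therefore changes by at
most `δ * |u n * v n|` at each step, and since it vanishes at infinity it is bounded by
`δ * ∑' n, u n ^ 2` everywhere. At the centre of the reflection the Wronskian factors as
`u m * (u (m + 1) - u (m - 1))` for `k = 2 * m` and as
`(u (m + 1) + u m) * (u (m + 1) - u m)` for `k = 2 * m + 1`, so one of the two factors is at most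
the square root of that bound, and which one decides the sign `ι`.
-/

open scoped Topology

theorem dist_le_tsum_int_of_dist_le_of_tendsto {α : Type*} [PseudoMetricSpace α] {f : ℤ → α}
    {d : ℤ → ℝ} {a : α} (hf : ∀ n, dist (f n) (f (n + 1)) ≤ d n) (hd : Summable d)
    (ha : Tendsto f atTop (𝓝 a)) (n : ℤ) : dist (f n) a ≤ ∑' m, d m := by
  have hinj : Function.Injective fun j : ℕ => n + (j : ℤ) :=
    (add_right_injective n).comp Nat.cast_injective
  have hlim : Tendsto (fun j : ℕ => f (n + j)) atTop (𝓝 a) :=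
    ha.comp (tendsto_atTop_add_const_left _ n tendsto_natCast_atTop_atTop)
  have hstep (j : ℕ) : dist (f (n + j)) (f (n + (j + 1 : ℕ))) ≤ d (n + j) := by
    simpa only [Nat.cast_add, Nat.cast_one, add_assoc] using hf (n + j)
  calc dist (f n) a
      ≤ ∑' j : ℕ, d (n + j) := by
        simpa only [Nat.cast_zero, add_zero] using
          dist_le_tsum_of_dist_le_of_tendsto₀ _ hstep (hd.comp_injective hinj) hlim
    _ ≤ ∑' m, d m :=
        tsum_comp_le_tsum_of_inj hd (fun m => dist_nonneg.trans (hf m)) hinj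

theorem tendsto_cofinite_zero_of_summable_sq_s19 {ι : Type*} {u : ι → ℝ}
    (hu : Summable fun i => u i ^ 2) : Tendsto u cofinite (𝓝 0) := by
  rw [tendsto_zero_iff_abs_tendsto_zero]
  simpa only [Function.comp_def, sqrt_sq_eq_abs, sqrt_zero] using hu.tendsto_cofinite_zero.sqrt

theorem abs_le_sqrt_or_abs_le_sqrt_of_abs_mul_le {a b t : ℝ} (h : |a * b| ≤ t) :
    |a| ≤ √t ∨ |b| ≤ √t := by
  by_contra! hlt
  refine h.not_gt ?_
  calc t = √t * √t := (mul_self_sqrt ((abs_nonneg _).trans h)).symm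
    _ < |a| * |b| := mul_lt_mul'' hlt.1 hlt.2 (sqrt_nonneg t) (sqrt_nonneg t)
    _ = |a * b| := (abs_mul a b).symm

theorem sqrt_mul_exp_neg_mul {C : ℝ} (hC : 0 ≤ C) (ε x : ℝ) :
    √(C * exp (-ε * x)) = √C * exp (-(ε / 2) * x) := by
  rw [sqrt_mul hC, ← exp_half]
  ring_nf

theorem pairNorm_le_abs_add_abs (a b : ℝ) : pairNorm a b ≤ |a| + |b| := by
  rw [pairNorm, sqrt_le_left (by positivity), ← sq_abs a, ← sq_abs b]
  linarith [add_sq |a| |b|, mul_nonneg (abs_nonneg a) (abs_nonneg b)]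

/-- The Wronskian (Casoratian) of two sequences, i.e. the determinant of the vectors
`(u n, u (n - 1))` and `(v n, v (n - 1))`. It is constant in `n` when `u` and `v` solve the same
eigenvalue equation, and its variation measures the difference of their potentials otherwise. -/
def discreteWronskian (u v : ℤ → ℝ) (n : ℤ) : ℝ :=
  u n * v (n - 1) - u (n - 1) * v n

theorem tendsto_discreteWronskian_cofinite {u v : ℤ → ℝ} (hu : Summable fun n => u n ^ 2)
    (hv : Summable fun n => v n ^ 2) : Tendsto (discreteWronskian u v) cofinite (𝓝 0) := by
  unfold discreteWronskian
  have hu₀ := tendsto_cofinite_zero_of_summable_sq_s19 hu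
  have hv₀ := tendsto_cofinite_zero_of_summable_sq_s19 hv
  have hpred : Tendsto (fun n : ℤ => n - 1) cofinite cofinite :=
    (sub_left_injective (b := (1 : ℤ))).tendsto_cofinite
  simpa only [mul_zero, sub_zero, Function.comp_apply] using
    (hu₀.mul (hv₀.comp hpred)).sub ((hu₀.comp hpred).mul hv₀)

namespace IsEigenfunction

variable {g h u v : ℤ → ℝ} {E δ : ℝ} {m : ℤ}

theorem comp_sub_left (hu : IsEigenfunction g E u) (k : ℤ) :
    IsEigenfunction (fun n => g (k - n)) E (fun n => u (k - n)) := fun n => by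
  dsimp only
  rw [← hu (k - n), sub_add_eq_sub_sub, ← sub_add k n 1, add_comm (u (k - n - 1))]

theorem discreteWronskian_add_one_sub (hu : IsEigenfunction g E u) (hv : IsEigenfunction h E v)
    (n : ℤ) : discreteWronskian u v (n + 1) - discreteWronskian u v n =
      (h n - g n) * (u n * v n) := by
  simp only [discreteWronskian, add_sub_cancel_right]
  linear_combination v n * hu n - u n * hv n

theorem abs_discreteWronskian_le (hu : IsEigenfunction g E u) (hv : IsEigenfunction h E v)
    (hu₂ : Summable fun n => u n ^ 2) (hv₂ : Summable fun n => v n ^ 2)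
    (hδ : ∀ n, |g n - h n| ≤ δ) (n : ℤ) :
    |discreteWronskian u v n| ≤ δ * ((∑' m, u m ^ 2 + ∑' m, v m ^ 2) / 2) := by
  have hstep (m : ℤ) : dist (discreteWronskian u v m) (discreteWronskian u v (m + 1)) ≤
      δ * ((u m ^ 2 + v m ^ 2) / 2) := by
    have amgm : |u m * v m| ≤ (u m ^ 2 + v m ^ 2) / 2 := by
      rw [abs_mul, ← sq_abs (u m), ← sq_abs (v m)]
      linarith [two_mul_le_add_sq |u m| |v m|]
    rw [dist_comm, dist_eq, hu.discreteWronskian_add_one_sub hv, abs_mul, abs_sub_comm (h m)]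
    exact mul_le_mul (hδ m) amgm (abs_nonneg _) ((abs_nonneg _).trans (hδ m))
  have hbound := dist_le_tsum_int_of_dist_le_of_tendsto hstep
    (((hu₂.add hv₂).div_const 2).mul_left δ)
    ((tendsto_discreteWronskian_cofinite hu₂ hv₂).mono_left atTop_le_cofinite) n
  rwa [dist_zero_right, norm_eq_abs, tsum_mul_left, tsum_div_const, hu₂.tsum_add hv₂] at hbound

theorem abs_discreteWronskian_comp_sub_left_le (hu : IsEigenfunction g E u)
    (hu₂ : Summable fun n => u n ^ 2) {k : ℤ} (hδ : ∀ n, |g n - g (k - n)| ≤ δ) (n : ℤ) :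
    |discreteWronskian u (fun n => u (k - n)) n| ≤ δ * ∑' m, u m ^ 2 := by
  have hbound := hu.abs_discreteWronskian_le (hu.comp_sub_left k) hu₂
    (hu₂.comp_injective sub_right_injective) hδ n
  have htsum : ∑' m, u (k - m) ^ 2 = ∑' m, u m ^ 2 := (Equiv.subLeft k).tsum_eq fun m => u m ^ 2
  rwa [htsum, add_self_div_two] at hbound

theorem exists_sign_pairNorm_le_of_even (hu : IsEigenfunction g E u)
    (hu₂ : Summable fun n => u n ^ 2) (hδ : ∀ n, |g n - g (m + m - n)| ≤ δ) :
    ∃ ι : ℝ, (ι = 1 ∨ ι = -1) ∧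
      pairNorm (u m + ι * u m) (u (m - 1) + ι * u (m + 1)) ≤
        (2 + |E - g m|) * √(δ * ∑' n, u n ^ 2) := by
  set s := √(δ * ∑' n, u n ^ 2)
  have hs : 0 ≤ s := sqrt_nonneg _
  have hW : discreteWronskian u (fun n => u (m + m - n)) m = u m * (u (m + 1) - u (m - 1)) := by
    rw [discreteWronskian, add_sub_cancel_right, show m + m - (m - 1) = m + 1 by ring]
    ring
  have hprod := hu.abs_discreteWronskian_comp_sub_left_le hu₂ hδ m
  rw [hW] at hprod
  rcases abs_le_sqrt_or_abs_le_sqrt_of_abs_mul_le hprod with hsmall | hsmall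
  · refine ⟨1, .inl rfl, ?_⟩
    have hsum : u (m - 1) + 1 * u (m + 1) = (E - g m) * u m := by linear_combination hu m
    calc pairNorm (u m + 1 * u m) (u (m - 1) + 1 * u (m + 1))
        ≤ |u m + 1 * u m| + |u (m - 1) + 1 * u (m + 1)| := pairNorm_le_abs_add_abs _ _
      _ = (2 + |E - g m|) * |u m| := by
        rw [hsum, one_mul, ← two_mul, abs_mul, abs_mul, abs_two, add_mul]
      _ ≤ (2 + |E - g m|) * s := by gcongr
  · refine ⟨-1, .inr rfl, ?_⟩
    calc pairNorm (u m + -1 * u m) (u (m - 1) + -1 * u (m + 1))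
        ≤ |u m + -1 * u m| + |u (m - 1) + -1 * u (m + 1)| := pairNorm_le_abs_add_abs _ _
      _ = |u (m + 1) - u (m - 1)| := by
        rw [neg_one_mul, neg_one_mul, add_neg_cancel, abs_zero, zero_add, ← sub_eq_add_neg,
          abs_sub_comm]
      _ ≤ s := hsmall
      _ ≤ (2 + |E - g m|) * s := le_mul_of_one_le_left hs (by linarith [abs_nonneg (E - g m)])

theorem exists_sign_pairNorm_le_of_odd (hu : IsEigenfunction g E u)
    (hu₂ : Summable fun n => u n ^ 2) (hδ : ∀ n, |g n - g (2 * m + 1 - n)| ≤ δ) :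
    ∃ ι : ℝ, (ι = 1 ∨ ι = -1) ∧
      pairNorm (u (m + 1) + ι * u m) (u m + ι * u (m + 1)) ≤
        2 * √(δ * ∑' n, u n ^ 2) := by
  have hW : discreteWronskian u (fun n => u (2 * m + 1 - n)) (m + 1) =
      (u (m + 1) + u m) * (u (m + 1) - u m) := by
    rw [discreteWronskian, add_sub_cancel_right, show 2 * m + 1 - m = m + 1 by ring,
      show 2 * m + 1 - (m + 1) = m by ring]
    ring
  have hprod := hu.abs_discreteWronskian_comp_sub_left_le hu₂ hδ (m + 1)
  rw [hW] at hprod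
  rcases abs_le_sqrt_or_abs_le_sqrt_of_abs_mul_le hprod with hsmall | hsmall
  · refine ⟨1, .inl rfl, (pairNorm_le_abs_add_abs _ _).trans ?_⟩
    rw [one_mul, one_mul, add_comm (u m), ← two_mul]
    gcongr
  · refine ⟨-1, .inr rfl, (pairNorm_le_abs_add_abs _ _).trans ?_⟩
    rw [neg_one_mul, neg_one_mul, ← sub_eq_add_neg, ← sub_eq_add_neg, abs_sub_comm (u m),
      ← two_mul]
    gcongr

end IsEigenfunction

theorem palindromic_phase_matching_general {g : ℤ → ℝ} (hg : ∃ M : ℝ, ∀ n : ℤ, |g n| ≤ M)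
    {E : ℝ} {u : ℤ → ℝ} (hu : IsEigenfunction g E u) (hu₂ : Summable fun n => u n ^ 2) :
    ∃ C : ℝ, 0 < C ∧ ∀ (k : ℤ) (δ : ℝ), (∀ n, |g n - g (k - n)| ≤ δ) →
      (Even k →
        ∃ ι : ℝ, (ι = 1 ∨ ι = -1) ∧
          pairNorm (u (k / 2) + ι * u (k - k / 2)) (u (k / 2 - 1) + ι * u (k - k / 2 + 1)) ≤
            C * √δ) ∧
      (Odd k →
        ∃ ι : ℝ, (ι = 1 ∨ ι = -1) ∧
          pairNorm (u ((k - 1) / 2 + 1) + ι * u (k - ((k - 1) / 2 + 1)))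
              (u ((k - 1) / 2) + ι * u (k - ((k - 1) / 2 + 1) + 1)) ≤
            C * √δ) := by
  obtain ⟨M, hM⟩ := hg
  have hM₀ : 0 ≤ M := (abs_nonneg _).trans (hM 0)
  set S := ∑' n, u n ^ 2
  -- The summand `1` keeps the constant positive when `u = 0`.
  refine ⟨(2 + |E| + M) * (√S + 1), by positivity, fun k δ hδ => ?_⟩
  have hconst {c : ℝ} (hc : c ≤ 2 + |E| + M) :
      c * √(δ * S) ≤ (2 + |E| + M) * (√S + 1) * √δ := by
    rw [sqrt_mul ((abs_nonneg _).trans (hδ 0)), mul_comm √δ, ← mul_assoc]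
    gcongr
    exact le_add_of_nonneg_right zero_le_one
  constructor
  · rintro ⟨m, rfl⟩
    rw [show (m + m) / 2 = m by lia, add_sub_cancel_right]
    obtain ⟨ι, hι, hle⟩ := hu.exists_sign_pairNorm_le_of_even hu₂ hδ
    have hEg : |E - g m| ≤ |E| + M := (abs_sub _ _).trans (by gcongr; exact hM m)
    exact ⟨ι, hι, hle.trans (hconst (by linarith))⟩
  · rintro ⟨m, rfl⟩
    rw [show (2 * m + 1 - 1) / 2 = m by lia, show 2 * m + 1 - (m + 1) = m by ring]
    obtain ⟨ι, hι, hle⟩ := hu.exists_sign_pairNorm_le_of_odd hu₂ hδ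
    exact ⟨ι, hι, hle.trans (hconst (by linarith [abs_nonneg E]))⟩

theorem palindromic_phase_matching
    (g : ℤ → ℝ) (hg : ∃ M : ℝ, ∀ n : ℤ, |g n| ≤ M)
    (E : ℝ) (u : ℤ → ℝ)
    (hu : IsEigenfunction g E u)
    (husum : Summable (fun n : ℤ => u n ^ 2))
    (hunorm : (∑' n : ℤ, u n ^ 2) = 1)
    (ε C : ℝ) (hε : 0 < ε) (hC : 0 < C)
    (k : ℕ → ℤ) (hk : Filter.Tendsto (fun i : ℕ => |k i|) Filter.atTop Filter.atTop)
    (hsym : ∀ (n : ℤ) (i : ℕ), |g n - g (k i - n)| ≤ C * Real.exp (-ε * |(k i : ℝ)|)) :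
    ∃ C' : ℝ, 0 < C' ∧ ∃ I : ℕ, ∀ i : ℕ, I ≤ i →
      (Even (k i) →
        ∃ ι : ℝ, (ι = 1 ∨ ι = -1) ∧
          pairNorm (u (k i / 2) + ι * u (k i - k i / 2))
              (u (k i / 2 - 1) + ι * u (k i - k i / 2 + 1)) ≤
            C' * Real.exp (-(ε / 2) * |(k i : ℝ)|)) ∧
      (Odd (k i) →
        ∃ ι : ℝ, (ι = 1 ∨ ι = -1) ∧
          pairNorm (u ((k i - 1) / 2 + 1) + ι * u (k i - ((k i - 1) / 2 + 1)))
              (u ((k i - 1) / 2) + ι * u (k i - ((k i - 1) / 2 + 1) + 1)) ≤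
            C' * Real.exp (-(ε / 2) * |(k i : ℝ)|)) := by
  obtain ⟨C', hC', hmatch⟩ := palindromic_phase_matching_general hg hu husum
  exact ⟨C' * √C, by positivity, 0, fun i _ => by
    simpa only [sqrt_mul_exp_neg_mul hC.le, ← mul_assoc] using hmatch (k i) _ (hsym · i)⟩
end
end
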